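/- arXiv:2511.02273 — 2 statements merged into one kernel-verified Lean document; each statement's English description precedes it below -/
import Mathlib

section
/- There exists an absolute constant C > 0 with the following property. Let R₀ > 0, let v₁, v₂ ∈ ℝ³ with |v₁ − v₂| ≥ (10/13)R₀, let R satisfy R₀/13 ≤ R ≤ 2R₀/13, let 0 < R₃ ≤ R₀/104, and let v₃ ∈ ℝ³ be arbitrary. Then the Lebesgue measure (in ℝ⁶) of the set {(w₁,w₂) ∈ Q_R(v₁) × Q_R(v₂) : S_{w₁,w₂} ∩ B_{R₃}(v₃) ≠ ∅} is at most C·(R₃/R₀)·|Q_R(v₁)|·|Q_R(v₂)|. -/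
noncomputable section

open MeasureTheory Real Set
open scoped RealInnerProductSpace

/-- `ℝ³` as a Euclidean space. -/
abbrev R3 : Type := EuclideanSpace ℝ (Fin 3)

/-- The unit sphere `𝕊²` in `ℝ³`. -/
abbrev S2 : Type := Metric.sphere (0 : R3) 1

/-- The surface measure on the unit sphere in `ℝ³` (total mass `4π`). -/
def sphMeasure : Measure S2 := Measure.toSphere (volume : Measure R3)

/-- Post-collision velocity `v' = (v+v_*)/2 + (|v-v_*|/2)σ`. -/
def vOut (v w : R3) (σ : S2) : R3 := (2⁻¹ : ℝ) • (v + w) + (‖v - w‖ / 2) • (σ : R3)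

/-- Post-collision velocity `v'_* = (v+v_*)/2 - (|v-v_*|/2)σ`. -/
def vOutStar (v w : R3) (σ : S2) : R3 := (2⁻¹ : ℝ) • (v + w) - (‖v - w‖ / 2) • (σ : R3)

/-- `cos θ = ((v - v_*)/|v - v_*|) · σ`. -/
def cosAngle (v w : R3) (σ : S2) : ℝ := ⟪‖v - w‖⁻¹ • (v - w), (σ : R3)⟫

/-- The collision kernel `B(v - v_*, σ) = |v - v_*|^γ b(cos θ)`. -/
def Bker (γ : ℝ) (b : ℝ → ℝ) (v w : R3) (σ : S2) : ℝ := ‖v - w‖ ^ γ * b (cosAngle v w σ)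

/-- Grad's angular cutoff assumption (H1), with the standing assumptions on `b`:
`b` is measurable, nonnegative, symmetric (`b(cos(π-θ)) = b(cos θ)`), and
`0 < C_b = 2π∫₀^π b(cos θ) sin θ dθ < ∞`. -/
structure GradCutoff (b : ℝ → ℝ) : Prop where
  measurable : Measurable b
  nonneg : ∀ x : ℝ, 0 ≤ b x
  symm : ∀ θ : ℝ, b (Real.cos (π - θ)) = b (Real.cos θ)
  integrable : IntervalIntegrable (fun θ : ℝ => b (Real.cos θ) * Real.sin θ) volume 0 π
  pos : 0 < ∫ θ in (0:ℝ)..π, b (Real.cos θ) * Real.sin θ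

/-- `C_b = 2π ∫₀^π b(cos θ) sin θ dθ`. -/
def Cb (b : ℝ → ℝ) : ℝ := 2 * π * ∫ θ in (0:ℝ)..π, b (Real.cos θ) * Real.sin θ

/-- `C_{b,2} = 2π ∫₀^π b(cos θ) sin³ θ dθ`. -/
def Cb2 (b : ℝ → ℝ) : ℝ := 2 * π * ∫ θ in (0:ℝ)..π, b (Real.cos θ) * Real.sin θ ^ 3

/-- `φ(ε) = ∫_{𝕊²} b(cos θ)(1_{0<θ<ε} + 1_{π-ε<θ<π}) dσ`,
written via the polar-angle parametrization of the sphere. -/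
def phiAng (b : ℝ → ℝ) (ε : ℝ) : ℝ :=
  2 * π * ((∫ θ in (0:ℝ)..ε, b (Real.cos θ) * Real.sin θ)
    + ∫ θ in (π - ε)..π, b (Real.cos θ) * Real.sin θ)

/-- Weighted `L¹` norm `‖f‖_{1,s} = ∫ |f(v)| (1+|v|²)^{s/2} dv`. -/
def wnorm (s : ℝ) (f : R3 → ℝ) : ℝ := ∫ v : R3, |f v| * (1 + ‖v‖ ^ 2) ^ (s / 2)

/-- Membership in the weighted space `L¹_s`. -/
def MemL1s (s : ℝ) (f : R3 → ℝ) : Prop :=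
  Integrable (fun v : R3 => |f v| * (1 + ‖v‖ ^ 2) ^ (s / 2))

/-- The Boltzmann–Fermi–Dirac collision operator `Q_FD(f,f)`. -/
def QFD (γ : ℝ) (b : ℝ → ℝ) (f : R3 → ℝ) (v : R3) : ℝ :=
  ∫ w : R3, ∫ σ : S2, Bker γ b v w σ *
      (f (vOut v w σ) * f (vOutStar v w σ) * (1 - f v) * (1 - f w)
        - f v * f w * (1 - f (vOut v w σ)) * (1 - f (vOutStar v w σ))) ∂sphMeasure

/-- `Q₁(f₁,f₂,f₃)(v) = ∫∫ B f₁(v') f₂(v'_*) f₃(v_*) dσ dv_*`. -/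
def Q1 (γ : ℝ) (b : ℝ → ℝ) (f₁ f₂ f₃ : R3 → ℝ) (v : R3) : ℝ :=
  ∫ w : R3, ∫ σ : S2, Bker γ b v w σ *
      (f₁ (vOut v w σ) * f₂ (vOutStar v w σ) * f₃ w) ∂sphMeasure

/-- `L_FD(f, 1-f, 1-f)(v) = ∫∫ B f(v_*)(1-f(v'))(1-f(v'_*)) dσ dv_*`. -/
def LFD (γ : ℝ) (b : ℝ → ℝ) (f : R3 → ℝ) (v : R3) : ℝ :=
  ∫ w : R3, ∫ σ : S2, Bker γ b v w σ *
      (f w * (1 - f (vOut v w σ)) * (1 - f (vOutStar v w σ))) ∂sphMeasure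

/-- The Fermi–Dirac entropy `S(f)` (with `0·ln 0 = 0`, as `Real.log 0 = 0`). -/
def entropy (f : R3 → ℝ) : ℝ :=
  -∫ v : R3, (f v * Real.log (f v) + (1 - f v) * Real.log (1 - f v))

/-- A conservative mild solution of the Boltzmann–Fermi–Dirac equation with
initial datum `f₀`. -/
structure IsFDSolution (γ : ℝ) (b : ℝ → ℝ) (f₀ : R3 → ℝ) (f : ℝ → R3 → ℝ) : Prop where
  measurable : ∀ t : ℝ, Measurable (f t)
  nonneg : ∀ t : ℝ, 0 ≤ t → ∀ v : R3, 0 ≤ f t v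
  le_one : ∀ t : ℝ, 0 ≤ t → ∀ v : R3, f t v ≤ 1
  memL12 : ∀ t : ℝ, 0 ≤ t → MemL1s 2 (f t)
  contL12 : ∀ t : ℝ, 0 ≤ t → ∀ ε : ℝ, 0 < ε → ∃ δ > 0, ∀ s : ℝ, 0 ≤ s →
      |s - t| < δ → wnorm 2 (fun v => f s v - f t v) < ε
  mild : ∃ Z : Set R3, volume Z = 0 ∧ ∀ t : ℝ, 0 ≤ t → ∀ v : R3, v ∉ Z →
      f t v = f₀ v + ∫ τ in (0:ℝ)..t, QFD γ b (f τ) v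
  mass : ∀ t : ℝ, 0 ≤ t → ∫ v : R3, f t v = ∫ v : R3, f₀ v
  momentum : ∀ t : ℝ, 0 ≤ t → ∫ v : R3, f t v • v = ∫ v : R3, f₀ v • v
  energy : ∀ t : ℝ, 0 ≤ t → ∫ v : R3, f t v * ‖v‖ ^ 2 = ∫ v : R3, f₀ v * ‖v‖ ^ 2

/-- Axis-parallel closed cube in `ℝ³` with side length `R` and center `x₀`. -/
def Qcube (R : ℝ) (x₀ : R3) : Set R3 := {y : R3 | ∀ i : Fin 3, |y i - x₀ i| ≤ R / 2}

/-- The cube, seen in `Fin 3 → ℝ`, has volume `R^3`. -/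
theorem volume_Qcube (R : ℝ) (hR : 0 ≤ R) (v : R3) :
    volume (Qcube R v) = ENNReal.ofReal (R ^ 3) := by
  have h : Qcube R v = (WithLp.ofLp : R3 → (Fin 3 → ℝ)) ⁻¹'
      (Set.univ.pi fun i => Icc (v i - R / 2) (v i + R / 2)) := by
    ext y
    simp only [Qcube, mem_setOf_eq, mem_preimage, mem_pi, mem_univ, true_imp_iff, mem_Icc, abs_le]
    refine forall_congr' fun i => ?_
    constructor <;> rintro ⟨h1, h2⟩ <;> constructor <;> linarith
  rw [h, (PiLp.volume_preserving_ofLp (Fin 3)).measure_preimage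
    (MeasurableSet.univ_pi fun i => measurableSet_Icc).nullMeasurableSet, volume_pi_pi]
  simp only [Real.volume_Icc]
  rw [Fin.prod_univ_three, ← ENNReal.ofReal_mul (by linarith), ← ENNReal.ofReal_mul (by nlinarith)]
  congr 1
  simp only [add_sub_sub_cancel, add_halves]
  ring

theorem exists_coord (a : R3) : ∃ i, ‖a‖ ≤ 2 * |a i| := by
  by_contra! h
  have h2 := EuclideanSpace.norm_sq_eq a
  rw [Fin.sum_univ_three] at h2
  simp only [Real.norm_eq_abs] at h2
  have h0 := h 0
  have h1 := h 1
  have h3 := h 2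
  nlinarith [abs_nonneg (a 0), abs_nonneg (a 1), abs_nonneg (a 2), norm_nonneg a]

theorem slab_volume (a : R3) (ha : a ≠ 0) (R s : ℝ) (hR : 0 ≤ R) (hs : 0 ≤ s) (v v₃ : R3) :
    volume {w : R3 | w ∈ Qcube R v ∧ |⟪a, w - v₃⟫| ≤ s * ‖a‖} ≤
      ENNReal.ofReal (4 * s * R ^ 2) := by
  obtain ⟨i, hi⟩ := exists_coord a
  have hn : 0 < ‖a‖ := norm_pos_iff.2 ha
  have hai : 0 < |a i| := by linarith
  set M : Matrix (Fin 3) (Fin 3) ℝ := Matrix.updateRow 1 i a.ofLp with hM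
  have hdet : M.det = a i := by
    rw [hM]
    fin_cases i <;> simp [Matrix.det_fin_three, Matrix.updateRow_apply]
  have hdet' : LinearMap.det (Matrix.toLin' M) = a i := by rw [LinearMap.det_toLin', hdet]
  set c : ℝ := ⟪a, v₃⟫ with hc
  set box : Set (Fin 3 → ℝ) := Set.univ.pi fun j =>
    if j = i then Icc (c - s * ‖a‖) (c + s * ‖a‖) else Icc (v j - R / 2) (v j + R / 2) with hbox
  have hsub : {w : R3 | w ∈ Qcube R v ∧ |⟪a, w - v₃⟫| ≤ s * ‖a‖} ⊆
      (WithLp.ofLp : R3 → (Fin 3 → ℝ)) ⁻¹' ((Matrix.toLin' M) ⁻¹' box) := by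
    rintro w ⟨hw, hs'⟩
    simp only [hbox, mem_preimage, mem_pi, mem_univ, true_imp_iff]
    intro j
    by_cases hj : j = i
    · subst hj
      have : (Matrix.toLin' M) w.ofLp j = ⟪a, w⟫ := by
        rw [Matrix.toLin'_apply, Matrix.mulVec, hM, Matrix.updateRow_self, PiLp.inner_apply]
        simp [dotProduct, mul_comm]
      rw [if_pos rfl, this, mem_Icc]
      rw [inner_sub_right, abs_le] at hs'
      constructor <;> linarith [hs'.1, hs'.2]
    · have : (Matrix.toLin' M) w.ofLp j = w j := by
        rw [Matrix.toLin'_apply, Matrix.mulVec, hM, Matrix.updateRow_ne hj]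
        simp [dotProduct, Matrix.one_apply]
      rw [if_neg hj, this, mem_Icc]
      have := abs_le.1 (hw j)
      constructor <;> linarith [this.1, this.2]
  have hbm : MeasurableSet box := by
    refine MeasurableSet.univ_pi fun j => ?_
    split_ifs <;> exact measurableSet_Icc
  have hpm : MeasurableSet ((Matrix.toLin' M) ⁻¹' box) :=
    (LinearMap.continuous_of_finiteDimensional (Matrix.toLin' M)).measurable hbm
  refine (measure_mono hsub).trans ?_
  rw [(PiLp.volume_preserving_ofLp (Fin 3)).measure_preimage hpm.nullMeasurableSet,
    Measure.addHaar_preimage_linearMap _ (by rw [hdet']; exact abs_pos.1 hai), hdet']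
  have hv : volume box = ENNReal.ofReal (2 * s * ‖a‖ * R ^ 2) := by
    rw [hbox, volume_pi_pi, Fin.prod_univ_three]
    have e1 : ∀ x : ℝ, volume (Icc (x - R / 2) (x + R / 2)) = ENNReal.ofReal R := by
      intro x; rw [Real.volume_Icc]; congr 1; ring
    have e2 : volume (Icc (c - s * ‖a‖) (c + s * ‖a‖)) = ENNReal.ofReal (2 * s * ‖a‖) := by
      rw [Real.volume_Icc]; congr 1; ring
    rw [ENNReal.ofReal_mul (by positivity), ENNReal.ofReal_pow hR]
    fin_cases i <;> simp [e1, e2, -Real.volume_Icc] <;> ring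
  rw [hv, ← ENNReal.ofReal_mul (abs_nonneg _)]
  apply ENNReal.ofReal_le_ofReal
  rw [abs_inv, inv_mul_le_iff₀ hai]
  have : 0 ≤ s * R ^ 2 := by positivity
  nlinarith

theorem dist_cube (R : ℝ) (v w : R3) (hR : 0 ≤ R) (h : w ∈ Qcube R v) : ‖w - v‖ ≤ R := by
  obtain ⟨i, hi⟩ := exists_coord (w - v)
  have := h i
  simp only [PiLp.sub_apply] at hi
  linarith

/-- The geometric heart: intersection forces near-orthogonality. -/
theorem inner_bound (w₁ w₂ v₃ : R3) (r : ℝ) (hr : r ≤ ‖w₁ - w₂‖)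
    (h : (Metric.sphere ((2⁻¹ : ℝ) • (w₁ + w₂)) (‖w₁ - w₂‖ / 2) ∩
              Metric.closedBall v₃ r).Nonempty) :
    |⟪w₁ - v₃, w₂ - v₃⟫| ≤ 2 * r * ‖w₁ - w₂‖ := by
  obtain ⟨x, hx1, hx2⟩ := h
  rw [mem_sphere_iff_norm] at hx1
  rw [mem_closedBall_iff_norm] at hx2
  set d := ‖(2⁻¹ : ℝ) • (w₁ + w₂) - v₃‖ with hd
  have key : ⟪w₁ - v₃, w₂ - v₃⟫ = d ^ 2 - (‖w₁ - w₂‖ / 2) ^ 2 := by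
    have e1 : (2⁻¹ : ℝ) • (w₁ + w₂) - v₃ = (2⁻¹ : ℝ) • ((w₁ - v₃) + (w₂ - v₃)) := by
      module
    have e2 : w₁ - w₂ = (w₁ - v₃) - (w₂ - v₃) := by abel
    rw [hd, e1, e2, norm_smul, mul_pow, div_pow, norm_add_sq_real,
      norm_sub_sq_real (w₁ - v₃) (w₂ - v₃)]
    norm_num
    ring
  have t1 : d ≤ ‖w₁ - w₂‖ / 2 + r := by
    have : (2⁻¹ : ℝ) • (w₁ + w₂) - v₃ = (x - v₃) - (x - (2⁻¹ : ℝ) • (w₁ + w₂)) := by abel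
    have := norm_sub_le (x - v₃) (x - (2⁻¹ : ℝ) • (w₁ + w₂))
    rw [show (x - v₃) - (x - (2⁻¹ : ℝ) • (w₁ + w₂)) = (2⁻¹ : ℝ) • (w₁ + w₂) - v₃ by abel] at this
    linarith
  have t2 : ‖w₁ - w₂‖ / 2 ≤ d + r := by
    have := norm_sub_le (x - v₃) ((2⁻¹ : ℝ) • (w₁ + w₂) - v₃)
    rw [show (x - v₃) - ((2⁻¹ : ℝ) • (w₁ + w₂) - v₃) = x - (2⁻¹ : ℝ) • (w₁ + w₂) by abel] at this
    linarith
  have hr0 : 0 ≤ r := (norm_nonneg _).trans hx2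
  have hd0 : 0 ≤ d := norm_nonneg _
  have hn := norm_nonneg (w₁ - w₂)
  rw [key, abs_le]
  constructor <;> nlinarith

theorem measurableSet_Qcube (R : ℝ) (v : R3) : MeasurableSet (Qcube R v) := by
  have : Qcube R v = ⋂ i, {y : R3 | |y i - v i| ≤ R / 2} := by ext; simp [Qcube]
  rw [this]
  refine MeasurableSet.iInter fun i => (isClosed_le ?_ ?_).measurableSet <;> fun_prop

/-- Fubini bound. -/
theorem half_volume (R s : ℝ) (hR : 0 ≤ R) (hs : 0 ≤ s) (v₁ v₂ v₃ : R3) :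
    volume {p : R3 × R3 | p.1 ∈ Qcube R v₁ ∧ p.1 ≠ v₃ ∧ p.2 ∈ Qcube R v₂ ∧
      |⟪p.1 - v₃, p.2 - v₃⟫| ≤ s * ‖p.1 - v₃‖} ≤
      ENNReal.ofReal (4 * s * R ^ 2) * ENNReal.ofReal (R ^ 3) := by
  have hm : MeasurableSet {p : R3 × R3 | p.1 ∈ Qcube R v₁ ∧ p.1 ≠ v₃ ∧ p.2 ∈ Qcube R v₂ ∧
      |⟪p.1 - v₃, p.2 - v₃⟫| ≤ s * ‖p.1 - v₃‖} := by
    refine (measurable_fst (measurableSet_Qcube R v₁)).inter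
      ((measurable_fst (measurableSet_singleton v₃).compl).inter
      ((measurable_snd (measurableSet_Qcube R v₂)).inter ?_))
    have hc : IsClosed {p : R3 × R3 | |⟪p.1 - v₃, p.2 - v₃⟫| ≤ s * ‖p.1 - v₃‖} := by
      refine isClosed_le ?_ ?_ <;> fun_prop
    exact hc.measurableSet
  rw [Measure.volume_eq_prod, Measure.prod_apply hm, ← volume_Qcube R hR v₁,
    ← lintegral_indicator_const (measurableSet_Qcube R v₁)]
  refine lintegral_mono fun x => ?_
  by_cases hx : x ∈ Qcube R v₁ ∧ x ≠ v₃
  · rw [indicator_of_mem hx.1]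
    refine le_trans (measure_mono ?_)
      (slab_volume (x - v₃) (sub_ne_zero.2 hx.2) R s hR hs v₂ v₃)
    rintro y ⟨-, -, h1, h2⟩
    exact ⟨h1, h2⟩
  · have : Prod.mk x ⁻¹' {p : R3 × R3 | p.1 ∈ Qcube R v₁ ∧ p.1 ≠ v₃ ∧ p.2 ∈ Qcube R v₂ ∧
      |⟪p.1 - v₃, p.2 - v₃⟫| ≤ s * ‖p.1 - v₃‖} = ∅ := by
      ext y
      simp only [mem_preimage, mem_setOf_eq, mem_empty_iff_false, iff_false]
      rintro ⟨h1, h2, -⟩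
      exact hx ⟨h1, h2⟩
    simp only [this, measure_empty, zero_le]

/-- Measure bound for the set of pairs `(w₁, w₂)` in two well-separated
cubes whose collision sphere `S_{w₁,w₂}` meets a small ball `B_{R₃}(v₃)`. -/
theorem sphere_ball_intersection_measure :
    ∃ C : ℝ, 0 < C ∧ ∀ R₀ : ℝ, 0 < R₀ → ∀ v₁ v₂ : R3, 10 / 13 * R₀ ≤ ‖v₁ - v₂‖ →
      ∀ R : ℝ, R₀ / 13 ≤ R → R ≤ 2 * R₀ / 13 → ∀ R₃ : ℝ, 0 < R₃ → R₃ ≤ R₀ / 104 →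
      ∀ v₃ : R3,
        volume {p : R3 × R3 | p.1 ∈ Qcube R v₁ ∧ p.2 ∈ Qcube R v₂ ∧
            (Metric.sphere ((2⁻¹ : ℝ) • (p.1 + p.2)) (‖p.1 - p.2‖ / 2) ∩
              Metric.closedBall v₃ (R₃ / 2)).Nonempty} ≤
          ENNReal.ofReal (C * (R₃ / R₀)) * volume (Qcube R v₁) * volume (Qcube R v₂) := by
  refine ⟨208, by norm_num, ?_⟩
  intro R₀ hR₀ v₁ v₂ hv R hR1 hR2 R₃ hR₃ hR₃' v₃
  have hR : 0 < R := by linarith [div_pos hR₀ (by norm_num : (0:ℝ) < 13)]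
  set A := {p : R3 × R3 | p.1 ∈ Qcube R v₁ ∧ p.1 ≠ v₃ ∧ p.2 ∈ Qcube R v₂ ∧
      |⟪p.1 - v₃, p.2 - v₃⟫| ≤ (2 * R₃) * ‖p.1 - v₃‖} with hA
  set B := {p : R3 × R3 | p.1 ∈ Qcube R v₂ ∧ p.1 ≠ v₃ ∧ p.2 ∈ Qcube R v₁ ∧
      |⟪p.1 - v₃, p.2 - v₃⟫| ≤ (2 * R₃) * ‖p.1 - v₃‖} with hB
  have hsub : {p : R3 × R3 | p.1 ∈ Qcube R v₁ ∧ p.2 ∈ Qcube R v₂ ∧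
            (Metric.sphere ((2⁻¹ : ℝ) • (p.1 + p.2)) (‖p.1 - p.2‖ / 2) ∩
              Metric.closedBall v₃ (R₃ / 2)).Nonempty} ⊆ A ∪ (MeasurableEquiv.prodComm ⁻¹' B) := by
    rintro ⟨w₁, w₂⟩ ⟨h1, h2, h3⟩
    dsimp only at h1 h2 h3
    have d1 := dist_cube R v₁ w₁ hR.le h1
    have d2 := dist_cube R v₂ w₂ hR.le h2
    have d3 : ‖v₁ - v₂‖ ≤ ‖w₁ - v₁‖ + ‖w₁ - w₂‖ + ‖w₂ - v₂‖ := by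
      have e : v₁ - v₂ = -(w₁ - v₁) + (w₁ - w₂) + (w₂ - v₂) := by abel
      rw [e]
      refine (norm_add₃_le).trans ?_
      rw [norm_neg]
    have d4 : 6 / 13 * R₀ ≤ ‖w₁ - w₂‖ := by linarith
    have hin := inner_bound w₁ w₂ v₃ (R₃ / 2) (by linarith) h3
    have d5 : ‖w₁ - w₂‖ ≤ ‖w₁ - v₃‖ + ‖w₂ - v₃‖ := by
      have := norm_sub_le (w₁ - v₃) (w₂ - v₃)
      rwa [sub_sub_sub_cancel_right] at this
    rcases le_total ‖w₂ - v₃‖ ‖w₁ - v₃‖ with hle | hle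
    · left
      refine ⟨h1, ?_, h2, ?_⟩
      · dsimp only
        rw [← sub_ne_zero, ← norm_pos_iff]
        linarith
      · dsimp only
        nlinarith
    · right
      refine ⟨h2, ?_, h1, ?_⟩
      · show w₂ ≠ v₃
        rw [← sub_ne_zero, ← norm_pos_iff]
        linarith
      · show |⟪w₂ - v₃, w₁ - v₃⟫| ≤ (2 * R₃) * ‖w₂ - v₃‖
        rw [real_inner_comm]
        nlinarith
  refine (measure_mono hsub).trans ((measure_union_le _ _).trans ?_)
  have hswap : volume (MeasurableEquiv.prodComm ⁻¹' B : Set (R3 × R3)) = volume B :=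
    (Measure.measurePreserving_swap (μ := (volume : Measure R3))
      (ν := (volume : Measure R3))).measure_preimage_equiv (f := MeasurableEquiv.prodComm) B
  rw [hswap]
  refine (add_le_add (half_volume R (2 * R₃) hR.le (by positivity) v₁ v₂ v₃)
    (half_volume R (2 * R₃) hR.le (by positivity) v₂ v₁ v₃)).trans ?_
  rw [volume_Qcube R hR.le, volume_Qcube R hR.le, ← add_mul,
    ← ENNReal.ofReal_add (by positivity) (by positivity)]
  refine mul_le_mul_left ?_ _
  rw [← ENNReal.ofReal_mul (by positivity)]
  apply ENNReal.ofReal_le_ofReal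
  rw [← sub_nonneg]
  have : 208 * (R₃ / R₀) * R ^ 3 - (4 * (2 * R₃) * R ^ 2 + 4 * (2 * R₃) * R ^ 2)
     = 16 * R₃ * R ^ 2 * (13 * R - R₀) / R₀ := by
    field_simp
    ring
  rw [this]
  have : 0 ≤ 13 * R - R₀ := by linarith
  positivity
end
end

section
/- Assume 0 ≤ γ ≤ 2, (H1), and (H2). Let f be a conservative mild solution of the Boltzmann–Fermi–Dirac equation with initial datum f₀, and suppose there exist 0 < ε < 1, v̄ ∈ ℝ³, δ > 0 and r₀ > 0 with |v̄| < r₀ such that ε ≤ f₀(v) ≤ 1 − ε whenever |v − v̄| ≤ δ. Then for each t > 0 there exist constants C₁(t) > 0 and C₂(t) > 0 such that for almost every v ∈ ℝ³, C₁(t) e^{−C₂(t)|v|²} ≤ f(t,v) ≤ 1 − C₁(t) e^{−C₂(t)|v|^{p}}, where p = 2·(ln 3)/(ln 2); moreover, for every 1 ≤ T < ∞, inf_{T^{−1} ≤ t ≤ T} C₁(t) > 0 and sup_{T^{−1} ≤ t ≤ T} C₂(t) < ∞. -/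
noncomputable section

open MeasureTheory Real Set
open scoped RealInnerProductSpace

lemma R3_norm_eq (x : R3) : ‖x‖ = √(x 0 ^ 2 + (x 1 ^ 2 + x 2 ^ 2)) := by
  rw [EuclideanSpace.norm_eq, Fin.sum_univ_three]; simp [add_assoc]

lemma arch_sub (x : ℝ) (g : ℝ → ENNReal) :
    ∫⁻ ρ in Ioi (0:ℝ), ENNReal.ofReal ρ * g (√(x ^ 2 + ρ ^ 2))
      = ∫⁻ s in Ioi |x|, ENNReal.ofReal s * g s := by
  have himg : (fun ρ : ℝ => √(x ^ 2 + ρ ^ 2)) '' Ioi 0 = Ioi |x| := by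
    ext s
    constructor
    · rintro ⟨ρ, hρ, rfl⟩
      have hρ : 0 < ρ := hρ
      rw [mem_Ioi]
      apply lt_sqrt_of_sq_lt
      rw [sq_abs]; nlinarith
    · intro hs
      have hs : |x| < s := hs
      have h0 : 0 ≤ |x| := abs_nonneg x
      have h1 : x ^ 2 < s ^ 2 := by rw [← sq_abs]; nlinarith
      refine ⟨√(s ^ 2 - x ^ 2), Real.sqrt_pos.2 (by linarith), ?_⟩
      simp only
      rw [Real.sq_sqrt (by linarith), show x ^ 2 + (s ^ 2 - x ^ 2) = s ^ 2 by ring,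
        Real.sqrt_sq (by linarith)]
  rw [← himg, lintegral_image_eq_lintegral_abs_deriv_mul (f' := fun ρ => ρ / √(x ^ 2 + ρ ^ 2))
    measurableSet_Ioi]
  · refine setLIntegral_congr_fun measurableSet_Ioi ?_
    intro ρ hρ
    have hρ : 0 < ρ := hρ
    have h1 : 0 < √(x ^ 2 + ρ ^ 2) := Real.sqrt_pos.2 (by positivity)
    simp only
    rw [← mul_assoc, ← ENNReal.ofReal_mul (abs_nonneg _), abs_of_pos (by positivity),
      div_mul_cancel₀ _ h1.ne']
  · intro ρ hρ
    have hρ : 0 < ρ := hρ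
    have h1 : x ^ 2 + ρ ^ 2 ≠ 0 := by positivity
    have := ((((hasDerivAt_id ρ).pow 2).const_add (x ^ 2)).sqrt (by simpa using h1))
    refine HasDerivAt.hasDerivWithinAt (this.congr_deriv ?_)
    simp only [id]
    have h2 : 0 < √(x ^ 2 + ρ ^ 2) := Real.sqrt_pos.2 (by positivity)
    have h3 : (id ^ 2 : ℝ → ℝ) ρ = ρ ^ 2 := rfl
    rw [h3]
    field_simp
    norm_num
  · intro a ha c hc h
    have ha : 0 < a := ha
    have hc : 0 < c := hc
    simp only at h
    rw [Real.sqrt_inj (by positivity) (by positivity)] at h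
    have : a ^ 2 = c ^ 2 := by linarith
    exact (pow_left_inj₀ ha.le hc.le (by norm_num)).1 this

lemma arch1 (Ψ : ℝ × ℝ → ENNReal) (hΨ : Measurable Ψ) :
    ∫⁻ x : R3, Ψ (x 0, ‖x‖) = ENNReal.ofReal (2 * π) *
      ∫⁻ x : ℝ, ∫⁻ s in Ioi |x|, ENNReal.ofReal s * Ψ (x, s) := by
  have e1 : ∫⁻ x : R3, Ψ (x 0, ‖x‖)
      = ∫⁻ y : Fin 3 → ℝ, Ψ (y 0, √(y 0 ^ 2 + (y 1 ^ 2 + y 2 ^ 2))) := by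
    rw [← (PiLp.volume_preserving_toLp (Fin 3)).lintegral_comp_emb
      (MeasurableEquiv.toLp 2 _).measurableEmbedding]
    simp only [R3_norm_eq]
  have e2 : ∫⁻ y : Fin 3 → ℝ, Ψ (y 0, √(y 0 ^ 2 + (y 1 ^ 2 + y 2 ^ 2)))
      = ∫⁻ z : ℝ × (Fin 2 → ℝ), Ψ (z.1, √(z.1 ^ 2 + (z.2 0 ^ 2 + z.2 1 ^ 2))) := by
    rw [← (volume_preserving_piFinSuccAbove (fun _ : Fin 3 => ℝ) 0).lintegral_comp_emb
      (MeasurableEquiv.measurableEmbedding _)]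
    rfl
  have e3 : ∀ x : ℝ, ∫⁻ y : Fin 2 → ℝ, Ψ (x, √(x ^ 2 + (y 0 ^ 2 + y 1 ^ 2)))
      = ∫⁻ p : ℝ × ℝ, Ψ (x, √(x ^ 2 + (p.1 ^ 2 + p.2 ^ 2))) := by
    intro x
    rw [← (volume_preserving_finTwoArrow ℝ).lintegral_comp_emb
      (MeasurableEquiv.measurableEmbedding _)]
    rfl
  have e4 : ∀ x : ℝ, ∫⁻ p : ℝ × ℝ, Ψ (x, √(x ^ 2 + (p.1 ^ 2 + p.2 ^ 2)))
      = ENNReal.ofReal (2 * π) * ∫⁻ ρ in Ioi (0:ℝ), ENNReal.ofReal ρ * Ψ (x, √(x ^ 2 + ρ ^ 2)) := by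
    intro x
    rw [← lintegral_comp_polarCoord_symm]
    have hm : Measurable fun ρ : ℝ => ENNReal.ofReal ρ * Ψ (x, √(x ^ 2 + ρ ^ 2)) := by fun_prop
    have : ∀ p : ℝ × ℝ, ENNReal.ofReal p.1 • Ψ (x, √(x ^ 2 + ((polarCoord.symm p).1 ^ 2
        + (polarCoord.symm p).2 ^ 2))) = ENNReal.ofReal p.1 * Ψ (x, √(x ^ 2 + p.1 ^ 2)) := by
      intro p
      simp only [polarCoord_symm_apply, smul_eq_mul]
      rw [show (p.1 * cos p.2) ^ 2 + (p.1 * sin p.2) ^ 2 = p.1 ^ 2 by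
        have := sin_sq_add_cos_sq p.2
        linear_combination p.1 ^ 2 * this]
    simp_rw [this]
    rw [polarCoord_target, Measure.volume_eq_prod, ← Measure.prod_restrict,
      lintegral_prod _ (by fun_prop)]
    simp only [lintegral_const, Measure.restrict_apply MeasurableSet.univ, univ_inter,
      Real.volume_Ioo]
    rw [lintegral_mul_const _ hm, mul_comm]
    congr 2; ring
  rw [e1, e2, Measure.volume_eq_prod, lintegral_prod _ (by fun_prop)]
  simp_rw [e3, e4, fun x => arch_sub x (fun s => Ψ (x, s))]
  rw [lintegral_const_mul' _ _ ENNReal.ofReal_ne_top]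

open scoped Pointwise in
lemma arch_set (k : R3) (hk : ‖k‖ = 1) (I : Set ℝ) (hI : MeasurableSet I) :
    sphMeasure {σ : S2 | ⟪k, (σ : R3)⟫ ∈ I} = ENNReal.ofReal (2 * π) * volume (I ∩ Ioo (-1) 1) := by
  have hmeas : MeasurableSet {σ : S2 | ⟪k, (σ : R3)⟫ ∈ I} := by
    have : Measurable fun σ : S2 => ⟪k, (σ : R3)⟫ := by fun_prop
    exact this hI
  set D : Set (ℝ × ℝ) := {q | q.2 < 1 ∧ 0 < q.2 ∧ q.1 / q.2 ∈ I} with hD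
  have hDm : MeasurableSet D := by
    refine (measurableSet_lt measurable_snd measurable_const).inter
      ((measurableSet_lt measurable_const measurable_snd).inter ?_)
    exact (measurable_fst.div measurable_snd) hI
  have s1 : Ioo (0:ℝ) 1 • ((↑) '' {σ : S2 | ⟪k, (σ : R3)⟫ ∈ I} : Set R3)
      = {x : R3 | (⟪k, x⟫, ‖x‖) ∈ D} := by
    ext x
    rw [Set.mem_smul]
    constructor
    · rintro ⟨r, ⟨hr0, hr1⟩, _, ⟨σ, hσ, rfl⟩, rfl⟩
      have h1 : ‖(σ : R3)‖ = 1 := by simp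
      have : ‖r • (σ : R3)‖ = r := by rw [norm_smul, h1, mul_one, norm_of_nonneg hr0.le]
      simp only [hD, mem_ofPred_eq, this, inner_smul_right]
      refine ⟨hr1, hr0, ?_⟩
      rw [mul_div_cancel_left₀ _ hr0.ne']; exact hσ
    · rintro ⟨h1, h0, h⟩
      simp only at h1 h0 h
      refine ⟨‖x‖, ⟨h0, h1⟩, ‖x‖⁻¹ • x, ⟨⟨‖x‖⁻¹ • x, ?_⟩, ?_, rfl⟩, ?_⟩
      · simp [norm_smul, h0.ne']
      · simp only [mem_ofPred_eq, inner_smul_right]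
        rwa [inv_mul_eq_div]
      · simp [smul_smul, h0.ne']
  have s2 : volume {x : R3 | (⟪k, x⟫, ‖x‖) ∈ D} = volume {x : R3 | (x 0, ‖x‖) ∈ D} := by
    have hn : ‖k‖ = ‖(EuclideanSpace.single 0 1 : R3)‖ := by rw [hk]; simp
    have hR := Submodule.reflection_sub hn
    set R := (ℝ ∙ (k - (EuclideanSpace.single 0 1 : R3)))ᗮ.reflection
    have hm : MeasurableSet {x : R3 | (x 0, ‖x‖) ∈ D} := by
      have : Measurable fun x : R3 => (x 0, ‖x‖) := by fun_prop
      exact this hDm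
    rw [← (LinearIsometryEquiv.measurePreserving R).measure_preimage hm.nullMeasurableSet]
    congr 1
    ext x
    simp only [mem_ofPred_eq, mem_preimage, LinearIsometryEquiv.norm_map]
    have : ⟪k, x⟫ = (R x) 0 := by
      rw [← R.inner_map_map, hR]; simp [EuclideanSpace.inner_single_left]
    rw [this]
  have s3 : volume {x : R3 | (x 0, ‖x‖) ∈ D} = ∫⁻ x : R3, D.indicator 1 (x 0, ‖x‖) := by
    have hm : MeasurableSet {x : R3 | (x 0, ‖x‖) ∈ D} := by
      have : Measurable fun x : R3 => (x 0, ‖x‖) := by fun_prop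
      exact this hDm
    rw [← lintegral_indicator_one hm]; rfl
  have s4 : ∫⁻ x : ℝ, ∫⁻ s in Ioi |x|, ENNReal.ofReal s * D.indicator 1 (x, s)
      = ∫⁻ s in Ioo (0:ℝ) 1, ENNReal.ofReal (s ^ 2) * volume (I ∩ Ioo (-1) 1) := by
    have a1 : ∀ x : ℝ, ∫⁻ s in Ioi |x|, ENNReal.ofReal s * D.indicator 1 (x, s)
        = ∫⁻ s in Ioo (0:ℝ) 1, ENNReal.ofReal s *
          ({q : ℝ × ℝ | |q.1| < q.2 ∧ q.1 / q.2 ∈ I}.indicator 1 (x, s)) := by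
      intro x
      rw [← lintegral_indicator measurableSet_Ioi, ← lintegral_indicator measurableSet_Ioo]
      congr 1 with s
      have hd : (x, s) ∈ D ↔ (s < 1 ∧ 0 < s ∧ x / s ∈ I) := Iff.rfl
      simp only [indicator, hd, mem_Ioi, mem_Ioo, mem_ofPred_eq]
      by_cases h1 : |x| < s
      · have h2 : 0 < s := (abs_nonneg x).trans_lt h1
        by_cases h3 : s < 1 <;> by_cases h4 : x / s ∈ I <;> simp [hd, h1, h2, h3, h4]
      · simp [hd, h1]
    simp_rw [a1]
    rw [lintegral_lintegral_swap]
    · refine setLIntegral_congr_fun measurableSet_Ioo ?_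
      intro s hs
      have h0 : 0 < s := hs.1
      simp only
      rw [lintegral_const_mul' _ _ ENNReal.ofReal_ne_top]
      have : ∫⁻ x : ℝ, ({q : ℝ × ℝ | |q.1| < q.2 ∧ q.1 / q.2 ∈ I}.indicator 1 (x, s))
          = volume (s • (I ∩ Ioo (-1) 1)) := by
        rw [← lintegral_indicator_one]
        · congr 1 with x
          have : (|x| < s ∧ x / s ∈ I) ↔ x ∈ s • (I ∩ Ioo (-1) 1) := by
            rw [mem_smul_set_iff_inv_smul_mem₀ h0.ne', smul_eq_mul, inv_mul_eq_div, mem_inter_iff,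
              mem_Ioo, ← abs_lt, abs_div, abs_of_pos h0, div_lt_one h0, and_comm]
          by_cases hx : |x| < s ∧ x / s ∈ I
          · rw [indicator_of_mem (show (x, s) ∈ {q : ℝ × ℝ | |q.1| < q.2 ∧ q.1 / q.2 ∈ I} from hx),
              indicator_of_mem (this.1 hx)]; rfl
          · rw [indicator_of_notMem (show (x, s) ∉ {q : ℝ × ℝ | |q.1| < q.2 ∧ q.1 / q.2 ∈ I} from hx),
              indicator_of_notMem (fun h => hx (this.2 h))]
        · exact (hI.inter measurableSet_Ioo).const_smul₀ s
      rw [this, Measure.addHaar_smul]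
      simp only [Module.finrank_self, pow_one, abs_of_pos h0]
      rw [← mul_assoc, ← ENNReal.ofReal_mul h0.le, sq]
    · apply Measurable.aemeasurable
      apply Measurable.mul (by fun_prop)
      have : MeasurableSet {q : ℝ × ℝ | |q.1| < q.2 ∧ q.1 / q.2 ∈ I} := by
        refine (measurableSet_lt (by fun_prop) measurable_snd).inter ?_
        exact (measurable_fst.div measurable_snd) hI
      exact measurable_one.indicator this
  have s5 : ∫⁻ s in Ioo (0:ℝ) 1, ENNReal.ofReal (s ^ 2) = ENNReal.ofReal (1/3) := by
    rw [Measure.restrict_congr_set Ioo_ae_eq_Ioc, ← ofReal_integral_eq_lintegral_ofReal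
      (intervalIntegral.intervalIntegrable_pow _).1 (Filter.Eventually.of_forall fun s => by positivity),
      ← intervalIntegral.integral_of_le zero_le_one]
    congr 1; simp; norm_num
  rw [sphMeasure, Measure.toSphere_apply' _ hmeas, s1, s2, s3, arch1 _ (measurable_one.indicator hDm),
    s4, lintegral_mul_const _ (by fun_prop), s5]
  rw [finrank_euclideanSpace_fin, ← mul_assoc, ← mul_assoc]
  congr 1
  rw [show ((3:ℕ):ENNReal) = ENNReal.ofReal 3 by simp, ← ENNReal.ofReal_mul (by norm_num),
    ← ENNReal.ofReal_mul (by positivity)]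
  congr 1; ring

lemma arch (k : R3) (hk : ‖k‖ = 1) (φ : ℝ → ENNReal) (hφ : Measurable φ) :
    ∫⁻ σ : S2, φ ⟪k, (σ : R3)⟫ ∂sphMeasure
      = ENNReal.ofReal (2 * π) * ∫⁻ x in Ioo (-1:ℝ) 1, φ x := by
  have hm : Measurable fun σ : S2 => ⟪k, (σ : R3)⟫ := by fun_prop
  have : Measure.map (fun σ : S2 => ⟪k, (σ : R3)⟫) sphMeasure
      = ENNReal.ofReal (2 * π) • volume.restrict (Ioo (-1:ℝ) 1) := by
    ext I hI
    rw [Measure.map_apply hm hI, Measure.smul_apply, Measure.restrict_apply hI]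
    exact arch_set k hk I hI
  rw [← lintegral_map hφ hm, this, lintegral_smul_measure, smul_eq_mul]


lemma b_fin (b : ℝ → ℝ) (hb : GradCutoff b) :
    ∫⁻ x in Ioo (-1:ℝ) 1, ENNReal.ofReal (b x) < ⊤ := by
  have himg : cos '' Ioo 0 π = Ioo (-1) 1 := by
    ext x
    constructor
    · rintro ⟨θ, ⟨h0, h1⟩, rfl⟩
      constructor
      · rw [← cos_pi]; exact cos_lt_cos_of_nonneg_of_le_pi h0.le le_rfl h1
      · rw [← cos_zero]; exact cos_lt_cos_of_nonneg_of_le_pi le_rfl h1.le h0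
    · rintro ⟨h0, h1⟩
      exact ⟨arccos x, ⟨arccos_pos.2 h1, arccos_lt_pi.2 h0⟩, cos_arccos h0.le h1.le⟩
  rw [← himg, lintegral_image_eq_lintegral_abs_deriv_mul (f' := fun θ => - sin θ) measurableSet_Ioo
    (fun θ _ => (hasDerivAt_cos θ).hasDerivWithinAt)
    (injOn_cos.mono Ioo_subset_Icc_self)]
  have h := hb.integrable
  rw [intervalIntegrable_iff_integrableOn_Ioo_of_le pi_pos.le] at h
  have h2 := h.hasFiniteIntegral
  refine lt_of_le_of_lt (lintegral_mono_ae ?_) h2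
  filter_upwards [ae_restrict_mem measurableSet_Ioo] with θ hθ
  have hs : 0 < sin θ := sin_pos_of_pos_of_lt_pi hθ.1 hθ.2
  rw [abs_neg, abs_of_pos hs, ← ENNReal.ofReal_mul hs.le, ← ofReal_norm_eq_enorm, mul_comm]
  exact ENNReal.ofReal_le_ofReal (le_abs_self _)

lemma b_half_aux (b : ℝ → ℝ) (S : Set ℝ) (hS : MeasurableSet S)
    (hS1 : ∀ x ∈ S, 1/2 ≤ x ^ 2 ∧ x ^ 2 < 1) (hinj : ∀ x ∈ S, ∀ y ∈ S, x ^ 2 = y ^ 2 → x = y) :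
    ∫⁻ x in S, ENNReal.ofReal (b (1 - 2 * x ^ 2)) ≤ ∫⁻ x in Ioo (-1:ℝ) 1, ENNReal.ofReal (b x) := by
  have himg : (fun x : ℝ => 1 - 2 * x ^ 2) '' S ⊆ Ioo (-1) 1 := by
    rintro _ ⟨x, hx, rfl⟩
    have := hS1 x hx
    constructor <;> simp only <;> linarith
  refine le_trans ?_ (lintegral_mono_set himg)
  rw [lintegral_image_eq_lintegral_abs_deriv_mul (f' := fun x => - (4 * x)) hS]
  · refine setLIntegral_mono' hS fun x hx => ?_
    have h1 := hS1 x hx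
    refine le_mul_of_one_le_left (by positivity) ?_
    rw [ENNReal.one_le_ofReal, abs_neg, abs_mul]
    have : (1/2)^2 ≤ |x| ^ 2 := by rw [sq_abs]; linarith
    have := abs_le_of_sq_le_sq' this (abs_nonneg x)
    norm_num; linarith
  · intro x _
    have := (((hasDerivAt_pow 2 x).const_mul 2).const_sub 1)
    refine HasDerivAt.hasDerivWithinAt (this.congr_deriv ?_)
    norm_num; ring
  · intro x hx y hy h
    simp only at h
    exact hinj x hx y hy (by linarith)

lemma b_half (b : ℝ → ℝ) :
    ∫⁻ x in Ioo (-1:ℝ) 1, ({x : ℝ | 1/2 ≤ x ^ 2}.indicator (fun x => ENNReal.ofReal (b (1 - 2 * x ^ 2)))) x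
      ≤ 2 * ∫⁻ x in Ioo (-1:ℝ) 1, ENNReal.ofReal (b x) := by
  have hm : MeasurableSet {x : ℝ | 1/2 ≤ x ^ 2} := measurableSet_le (by fun_prop) (by fun_prop)
  rw [lintegral_indicator hm, Measure.restrict_restrict hm]
  have hsub : {x : ℝ | 1/2 ≤ x ^ 2} ∩ Ioo (-1:ℝ) 1 ⊆ ({x : ℝ | 1/2 ≤ x ^ 2} ∩ Ioo (-1:ℝ) 0) ∪
      ({x : ℝ | 1/2 ≤ x ^ 2} ∩ Ioo (0:ℝ) 1) := by
    rintro x ⟨h1, h2, h3⟩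
    have h1 : 1/2 ≤ x ^ 2 := h1
    rcases lt_trichotomy x 0 with h | h | h
    · exact Or.inl ⟨h1, h2, h⟩
    · subst h; norm_num at h1
    · exact Or.inr ⟨h1, h, h3⟩
  refine (lintegral_mono_set hsub).trans ((lintegral_union_le _ _ _).trans ?_)
  rw [two_mul]
  refine add_le_add (b_half_aux b _ (hm.inter measurableSet_Ioo) ?_ ?_)
    (b_half_aux b _ (hm.inter measurableSet_Ioo) ?_ ?_)
  · rintro x ⟨h1, h2, h3⟩
    exact ⟨h1, by nlinarith⟩
  · rintro x ⟨h1, h2, h3⟩ y ⟨h4, h5, h6⟩ h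
    nlinarith
  · rintro x ⟨h1, h2, h3⟩
    exact ⟨h1, by nlinarith⟩
  · rintro x ⟨h1, h2, h3⟩ y ⟨h4, h5, h6⟩ h
    nlinarith

/-- The map `z ↦ (z - |z| s)/2`, so that `v - v' = Tmap σ (v - w)`. -/
def Tmap (s z : R3) : R3 := (2⁻¹ : ℝ) • (z - ‖z‖ • s)

lemma Tmap_norm_sq (s z : R3) (hs : ‖s‖ = 1) : 2 * ‖Tmap s z‖ ^ 2 = ‖z‖ ^ 2 - ‖z‖ * ⟪z, s⟫ := by
  rw [Tmap, norm_smul, mul_pow, norm_sub_sq_real, norm_smul, inner_smul_right, hs]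
  simp; ring

lemma Tmap_inner (s z : R3) (hs : ‖s‖ = 1) : 2 * ⟪Tmap s z, s⟫ = ⟪z, s⟫ - ‖z‖ := by
  rw [Tmap, inner_smul_left, inner_sub_left, inner_smul_left, real_inner_self_eq_norm_sq, hs]
  simp

lemma Tmap_lintegral (s : R3) (hs : ‖s‖ = 1) (g : R3 → ENNReal) :
    ∫⁻ z in {z : R3 | ⟪z, s⟫ ≤ 0}, g (Tmap s z) ≤ 8 * ∫⁻ y, g y := by
  set H : Set R3 := {z : R3 | ⟪z, s⟫ ≤ 0} \ {0} with hH
  have hHm : MeasurableSet H :=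
    (measurableSet_le (by fun_prop) (by fun_prop)).diff (measurableSet_singleton _)
  have hHae : (H : Set R3) =ᵐ[volume] {z : R3 | ⟪z, s⟫ ≤ 0} := sdiff_null_ae_eq_self (by simp)
  rw [← Measure.restrict_congr_set hHae]
  set T' : R3 → (R3 →L[ℝ] R3) := fun z => (2⁻¹ : ℝ) • (ContinuousLinearMap.id ℝ R3 -
    (‖z‖⁻¹ • innerSL ℝ z).smulRight s) with hT'
  have hder : ∀ z ∈ H, HasFDerivWithinAt (Tmap s) (T' z) H z := by
    intro z hz
    have hz0 : z ≠ 0 := hz.2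
    have hzn : ‖z‖ ≠ 0 := norm_ne_zero_iff.2 hz0
    have h1 : HasFDerivAt (fun x : R3 => ‖x‖) (‖z‖⁻¹ • innerSL ℝ z) z := by
      have h := ((hasStrictFDerivAt_norm_sq z).hasFDerivAt).sqrt (by positivity)
      simp only [sqrt_sq (norm_nonneg _)] at h
      refine h.congr_fderiv ?_
      ext x
      simp
      field_simp
    exact (((hasFDerivAt_id z).sub (h1.smul_const s)).const_smul (2⁻¹ : ℝ)).hasFDerivWithinAt
  have hdet : ∀ z ∈ H, 1 ≤ 8 * ENNReal.ofReal |(T' z).det| := by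
    intro z hz
    have hz0 : z ≠ 0 := hz.2
    have hzn : 0 < ‖z‖ := norm_pos_iff.2 hz0
    have hzs : ⟪z, s⟫ ≤ 0 := hz.1
    have e : ((T' z : R3 →L[ℝ] R3) : R3 →ₗ[ℝ] R3) = (2⁻¹ : ℝ) •
        LinearMap.transvection (-((‖z‖⁻¹ • innerSL ℝ z : R3 →L[ℝ] ℝ) : R3 →ₗ[ℝ] ℝ)) s := by
      ext x
      simp [hT', LinearMap.transvection, sub_eq_add_neg]
    have : (T' z).det = 8⁻¹ * (1 - ‖z‖⁻¹ * ⟪z, s⟫) := by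
      rw [ContinuousLinearMap.det, e, LinearMap.det_smul, LinearMap.transvection.det]
      rw [finrank_euclideanSpace_fin]
      simp
      norm_num
      ring
    rw [this]
    have h3 : ‖z‖⁻¹ * ⟪z, s⟫ ≤ 0 := mul_nonpos_of_nonneg_of_nonpos (by positivity) hzs
    rw [show (8:ENNReal) = ENNReal.ofReal 8 by simp, ← ENNReal.ofReal_mul (by norm_num),
      ENNReal.one_le_ofReal, abs_of_nonneg (by linarith)]
    linarith
  have hinj : InjOn (Tmap s) H := by
    intro z hz y hy h
    have hz0 : 0 < ‖z‖ := norm_pos_iff.2 hz.2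
    have hy0 : 0 < ‖y‖ := norm_pos_iff.2 hy.2
    have hzs : ⟪z, s⟫ ≤ 0 := hz.1
    have hys : ⟪y, s⟫ ≤ 0 := hy.1
    have a1 := Tmap_norm_sq s z hs
    have a2 := Tmap_norm_sq s y hs
    have a3 := Tmap_inner s z hs
    have a4 := Tmap_inner s y hs
    rw [h] at a1 a3
    have h5 : ‖z‖ * (‖z‖ - ⟪z, s⟫) = ‖y‖ * (‖y‖ - ⟪y, s⟫) := by linarith
    have h6 : ‖z‖ - ⟪z, s⟫ = ‖y‖ - ⟪y, s⟫ := by linarith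
    have h7 : ‖z‖ = ‖y‖ := by
      rw [h6] at h5
      exact mul_right_cancel₀ (by linarith : ‖y‖ - ⟪y, s⟫ ≠ 0) h5
    simp only [Tmap, h7] at h
    have := smul_right_injective R3 (by norm_num : (2⁻¹:ℝ) ≠ 0) h
    exact sub_left_injective this
  calc ∫⁻ z in H, g (Tmap s z) ≤ ∫⁻ z in H, 8 * (ENNReal.ofReal |(T' z).det| * g (Tmap s z)) := by
        refine setLIntegral_mono' hHm fun z hz => ?_
        rw [← mul_assoc]
        exact le_mul_of_one_le_left (by positivity) (hdet z hz)
    _ = 8 * ∫⁻ z in H, ENNReal.ofReal |(T' z).det| * g (Tmap s z) :=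
        lintegral_const_mul' _ _ (by simp)
    _ = 8 * ∫⁻ y in Tmap s '' H, g y := by
        rw [lintegral_image_eq_lintegral_abs_det_fderiv_mul volume hHm hder hinj]
    _ ≤ 8 * ∫⁻ y, g y := by gcongr; exact Measure.restrict_le_self


instance : IsFiniteMeasure sphMeasure := by unfold sphMeasure; infer_instance

/-- The product measure `dw dσ`. -/
def Jm : Measure (R3 × S2) := (volume : Measure R3).prod sphMeasure

instance : SFinite Jm := by unfold Jm; infer_instance

lemma vOut_eq (v w : R3) (σ : S2) : vOut v w σ = v - Tmap σ (v - w) := by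
  unfold vOut Tmap
  module

lemma vOutStar_eq (v w : R3) (σ : S2) : vOutStar v w σ = v - Tmap (-σ) (v - w) := by
  unfold vOutStar Tmap
  module

@[fun_prop]
lemma measurable_Tmap {α : Type*} [MeasurableSpace α] {s z : α → R3} (hs : Measurable s)
    (hz : Measurable z) : Measurable fun a => Tmap (s a) (z a) := by
  unfold Tmap; fun_prop

@[fun_prop]
lemma measurable_vOut {α : Type*} [MeasurableSpace α] {v w : α → R3} {s : α → S2} (hv : Measurable v)
    (hw : Measurable w) (hs : Measurable s) : Measurable fun a => vOut (v a) (w a) (s a) := by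
  unfold vOut; fun_prop

@[fun_prop]
lemma measurable_vOutStar {α : Type*} [MeasurableSpace α] {v w : α → R3} {s : α → S2}
    (hv : Measurable v)
    (hw : Measurable w) (hs : Measurable s) : Measurable fun a => vOutStar (v a) (w a) (s a) := by
  unfold vOutStar; fun_prop

@[fun_prop]
lemma measurable_cosAngle {α : Type*} [MeasurableSpace α] {v w : α → R3} {s : α → S2}
    (hv : Measurable v)
    (hw : Measurable w) (hs : Measurable s) : Measurable fun a => cosAngle (v a) (w a) (s a) := by
  unfold cosAngle; fun_prop

lemma measurable_Bker {α : Type*} [MeasurableSpace α] (γ : ℝ) (b : ℝ → ℝ) (hb : Measurable b)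
    {v w : α → R3} {s : α → S2} (hv : Measurable v)
    (hw : Measurable w) (hs : Measurable s) : Measurable fun a => Bker γ b (v a) (w a) (s a) := by
  unfold Bker; fun_prop

lemma Bker_nonneg (γ : ℝ) (b : ℝ → ℝ) (hb : GradCutoff b) (v w : R3) (σ : S2) :
    0 ≤ Bker γ b v w σ := mul_nonneg (by positivity) (hb.nonneg _)

lemma b_even (b : ℝ → ℝ) (hb : GradCutoff b) (x : ℝ) (h : |x| ≤ 1) : b (-x) = b x := by
  have := hb.symm (arccos x)
  rwa [cos_pi_sub, cos_arccos (abs_le.1 h).1 (abs_le.1 h).2] at this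

lemma unit_normalize (z : R3) (hz : z ≠ 0) : ‖(‖z‖⁻¹ • z : R3)‖ = 1 := by
  rw [norm_smul, norm_inv, norm_norm, inv_mul_cancel₀ (norm_ne_zero_iff.2 hz)]

/-- The finite constant governing all the upper bounds. -/
def Kb (b : ℝ → ℝ) : ENNReal :=
  ENNReal.ofReal (2 * π) * ∫⁻ x in Ioo (-1:ℝ) 1, ENNReal.ofReal (b x)

lemma Kb_lt_top (b : ℝ → ℝ) (hb : GradCutoff b) : Kb b < ⊤ :=
  ENNReal.mul_lt_top ENNReal.ofReal_lt_top (b_fin b hb)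

lemma ae_ne_R3 (v : R3) : ∀ᵐ w : R3, w ≠ v := by
  rw [ae_iff]; simp

lemma upper_loss (γ : ℝ) (b : ℝ → ℝ) (hb : GradCutoff b) (v : R3) (F : R3 → ℝ)
    (hF : Measurable F) :
    ∫⁻ p, ENNReal.ofReal (Bker γ b v p.1 p.2 * F p.1) ∂Jm
      = Kb b * ∫⁻ w, ENNReal.ofReal (‖v - w‖ ^ γ * F w) := by
  have hbm := hb.measurable
  have hm := measurable_Bker γ b hb.measurable (v := fun _ : R3 × S2 => v) (w := fun p => p.1)
    (s := fun p => p.2) (by fun_prop) (by fun_prop) (by fun_prop)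
  rw [Jm, lintegral_prod _ (by fun_prop), ← lintegral_const_mul _ (by fun_prop)]
  refine lintegral_congr_ae ?_
  filter_upwards [ae_ne_R3 v] with w hw
  have e : ∀ σ : S2, ENNReal.ofReal (Bker γ b v w σ * F w)
      = ENNReal.ofReal (b (cosAngle v w σ)) * ENNReal.ofReal (‖v - w‖ ^ γ * F w) := by
    intro σ
    rw [← ENNReal.ofReal_mul (hb.nonneg _)]
    congr 1
    unfold Bker; ring
  simp_rw [e]
  rw [lintegral_mul_const' _ _ ENNReal.ofReal_ne_top]
  congr 1
  exact arch _ (unit_normalize _ (sub_ne_zero.2 hw.symm)) (fun x => ENNReal.ofReal (b x))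
    (by fun_prop)

/-- angular weight after the change of variables -/
def betaf (b : ℝ → ℝ) (x : ℝ) : ENNReal :=
  {x : ℝ | 1/2 ≤ x ^ 2}.indicator (fun x => ENNReal.ofReal (b (1 - 2 * x ^ 2))) x

lemma betaf_even (b : ℝ → ℝ) (x : ℝ) : betaf b (-x) = betaf b x := by
  unfold betaf; simp [indicator]

lemma measurable_betaf (b : ℝ → ℝ) (hb : Measurable b) : Measurable (betaf b) := by
  unfold betaf
  exact Measurable.indicator (by fun_prop) (measurableSet_le (by fun_prop) (by fun_prop))

lemma gain_ptwise (γ : ℝ) (hγ0 : 0 ≤ γ) (hγ2 : γ ≤ 2) (b : ℝ → ℝ)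
    (hb : GradCutoff b) (s z : R3)
    (hs : ‖s‖ = 1) (hz : z ≠ 0) (hzs : ⟪z, s⟫ ≤ 0) (c : ℝ) (hc : 0 ≤ c) :
    ENNReal.ofReal (‖z‖ ^ γ * b (⟪‖z‖⁻¹ • z, s⟫) * c) ≤
      ENNReal.ofReal (2 * ‖Tmap s z‖ ^ γ * c) * betaf b ⟪‖Tmap s z‖⁻¹ • Tmap s z, s⟫ := by
  have hzn : 0 < ‖z‖ := norm_pos_iff.2 hz
  have h1 := Tmap_norm_sq s z hs
  have h2 := Tmap_inner s z hs
  set y := Tmap s z with hy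
  have hyn : 0 < ‖y‖ := by
    by_contra h
    have : ‖y‖ = 0 := le_antisymm (not_lt.1 h) (norm_nonneg _)
    rw [this] at h1
    nlinarith
  have hx : ⟪‖z‖⁻¹ • z, s⟫ = ⟪z, s⟫ / ‖z‖ := by
    rw [inner_smul_left]; simp [inv_mul_eq_div]
  have hx2 : ⟪‖y‖⁻¹ • y, s⟫ = ⟪y, s⟫ / ‖y‖ := by
    rw [inner_smul_left]; simp [inv_mul_eq_div]
  have key : 1 - 2 * (⟪y, s⟫ / ‖y‖) ^ 2 = ⟪z, s⟫ / ‖z‖ := by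
    have : ⟪y, s⟫ = (⟪z, s⟫ - ‖z‖) / 2 := by linarith
    rw [div_pow, this]
    have h3 : ‖y‖ ^ 2 = (‖z‖ ^ 2 - ‖z‖ * ⟪z, s⟫) / 2 := by linarith
    rw [h3]
    have h4 : ‖z‖ ^ 2 - ‖z‖ * ⟪z, s⟫ ≠ 0 := by nlinarith
    have h5 : ‖z‖ - ⟪z, s⟫ ≠ 0 := by linarith
    field_simp
    ring
  have hzneg : ⟪z, s⟫ / ‖z‖ ≤ 0 := div_nonpos_of_nonpos_of_nonneg hzs hzn.le
  have hmem : (⟪y, s⟫ / ‖y‖) ∈ {x : ℝ | 1/2 ≤ x ^ 2} := by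
    show 1/2 ≤ (⟪y, s⟫ / ‖y‖) ^ 2
    linarith
  rw [hx, hx2, betaf, indicator_of_mem hmem, key]
  have hzy : ‖z‖ ≤ √2 * ‖y‖ := by
    rw [← abs_of_pos hzn, ← abs_of_nonneg (by positivity : 0 ≤ √2 * ‖y‖), ← sq_le_sq, mul_pow,
      Real.sq_sqrt (by norm_num)]
    nlinarith
  have hpow : ‖z‖ ^ γ ≤ 2 * ‖y‖ ^ γ := by
    calc ‖z‖ ^ γ ≤ (√2 * ‖y‖) ^ γ := by gcongr
      _ = √2 ^ γ * ‖y‖ ^ γ := mul_rpow (by positivity) (by positivity)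
      _ ≤ 2 * ‖y‖ ^ γ := by
        gcongr
        calc √2 ^ γ ≤ √2 ^ (2:ℝ) := rpow_le_rpow_of_exponent_le (by
              rw [Real.one_le_sqrt]; norm_num) hγ2
          _ = 2 := by rw [rpow_two, Real.sq_sqrt (by norm_num)]
  rw [← ENNReal.ofReal_mul (by positivity)]
  have hbz : 0 ≤ b (⟪z, s⟫ / ‖z‖) := hb.nonneg _
  apply ENNReal.ofReal_le_ofReal
  calc ‖z‖ ^ γ * b (⟪z, s⟫ / ‖z‖) * c ≤ 2 * ‖y‖ ^ γ * b (⟪z, s⟫ / ‖z‖) * c := by gcongr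
    _ = _ := by ring

lemma gain_half (γ : ℝ) (hγ0 : 0 ≤ γ) (hγ2 : γ ≤ 2) (b : ℝ → ℝ) (hb : GradCutoff b)
    (v : R3) (e : ℝ) (he : e = 1 ∨ e = -1) (F : R3 → ℝ) (hF : Measurable F) (hF0 : ∀ x, 0 ≤ F x) :
    ∫⁻ p, {p : R3 × S2 | ⟪v - p.1, e • (p.2 : R3)⟫ ≤ 0}.indicator
      (fun p => ENNReal.ofReal (‖v - p.1‖ ^ γ * b (⟪‖v - p.1‖⁻¹ • (v - p.1), e • (p.2 : R3)⟫)
        * F (v - Tmap (e • (p.2 : R3)) (v - p.1)))) p ∂Jm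
      ≤ 32 * Kb b * ∫⁻ w, ENNReal.ofReal (‖v - w‖ ^ γ * F w) := by
  have hbm := hb.measurable
  have hbe := measurable_betaf b hbm
  have hes : ∀ σ : S2, ‖e • (σ : R3)‖ = 1 := by
    intro σ; rw [norm_smul]; rcases he with rfl | rfl <;> simp
  rw [Jm, lintegral_prod_symm]
  swap
  · refine (Measurable.indicator (by fun_prop) (measurableSet_le (by fun_prop) (by fun_prop))).aemeasurable
  set G : S2 → R3 → ENNReal := fun σ y => ENNReal.ofReal (2 * ‖y‖ ^ γ * F (v - y)) *
    betaf b ⟪‖y‖⁻¹ • y, e • (σ : R3)⟫ with hG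
  have hGm : Measurable (Function.uncurry G) := by
    rw [hG]; unfold Function.uncurry; fun_prop
  have step1 : ∀ σ : S2, ∫⁻ w, {p : R3 × S2 | ⟪v - p.1, e • (p.2 : R3)⟫ ≤ 0}.indicator
      (fun p => ENNReal.ofReal (‖v - p.1‖ ^ γ * b (⟪‖v - p.1‖⁻¹ • (v - p.1), e • (p.2 : R3)⟫)
        * F (v - Tmap (e • (p.2 : R3)) (v - p.1)))) (w, σ) ≤ 8 * ∫⁻ y, G σ y := by
    intro σ
    set s : R3 := e • (σ : R3) with hs
    set h : R3 → ENNReal := {z : R3 | ⟪z, s⟫ ≤ 0}.indicator (fun z =>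
      ENNReal.ofReal (‖z‖ ^ γ * b (⟪‖z‖⁻¹ • z, s⟫) * F (v - Tmap s z))) with hh
    have e1 : ∀ w : R3, {p : R3 × S2 | ⟪v - p.1, e • (p.2 : R3)⟫ ≤ 0}.indicator
      (fun p => ENNReal.ofReal (‖v - p.1‖ ^ γ * b (⟪‖v - p.1‖⁻¹ • (v - p.1), e • (p.2 : R3)⟫)
        * F (v - Tmap (e • (p.2 : R3)) (v - p.1)))) (w, σ) = h (v - w) := by
      intro w
      rw [hh]
      by_cases hc : ⟪v - w, s⟫ ≤ 0
      · rw [indicator_of_mem (show (v - w) ∈ {z : R3 | ⟪z, s⟫ ≤ 0} from hc), indicator_of_mem (show (w, σ) ∈ {p : R3 × S2 | ⟪v - p.1, e • (p.2 : R3)⟫ ≤ 0} from hc)]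
      · rw [indicator_of_notMem (show (v - w) ∉ {z : R3 | ⟪z, s⟫ ≤ 0} from hc), indicator_of_notMem (show (w, σ) ∉ {p : R3 × S2 | ⟪v - p.1, e • (p.2 : R3)⟫ ≤ 0} from hc)]
    simp_rw [e1]
    rw [lintegral_sub_left_eq_self h v]
    have hms : MeasurableSet {z : R3 | ⟪z, s⟫ ≤ 0} := measurableSet_le (by fun_prop) (by fun_prop)
    rw [hh, lintegral_indicator hms]
    refine le_trans ?_ (Tmap_lintegral s (hes σ) (G σ))
    refine lintegral_mono_ae ?_
    filter_upwards [ae_restrict_mem hms, ae_restrict_of_ae (ae_ne_R3 0)] with z hz hz0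
    exact gain_ptwise γ hγ0 hγ2 b hb s z (hes σ) hz0 hz _ (hF0 _)
  refine (lintegral_mono step1).trans ?_
  have hGm2 : AEMeasurable (Function.uncurry fun (σ : S2) y => G σ y) (sphMeasure.prod volume) :=
    hGm.aemeasurable
  rw [lintegral_const_mul _ (by exact hGm.lintegral_prod_right'), lintegral_lintegral_swap hGm2]
  have step2 : ∀ᵐ y : R3, ∫⁻ σ, G σ y ∂sphMeasure ≤
      (4 * Kb b) * ENNReal.ofReal (‖y‖ ^ γ * F (v - y)) := by
    filter_upwards [ae_ne_R3 0] with y hy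
    have e2 : ∀ σ : S2, G σ y = ENNReal.ofReal (2 * ‖y‖ ^ γ * F (v - y)) *
        betaf b ⟪‖y‖⁻¹ • y, (σ : R3)⟫ := by
      intro σ
      rw [hG]
      simp only
      rcases he with rfl | rfl
      · rw [one_smul]
      · rw [inner_smul_right, neg_one_mul, betaf_even]
    simp_rw [e2]
    rw [lintegral_const_mul' _ _ ENNReal.ofReal_ne_top,
      arch _ (unit_normalize y hy) _ hbe]
    have h3 := b_half b
    calc _ ≤ ENNReal.ofReal (2 * ‖y‖ ^ γ * F (v - y)) * (ENNReal.ofReal (2 * π) *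
          (2 * ∫⁻ x in Ioo (-1:ℝ) 1, ENNReal.ofReal (b x))) := by gcongr; exact h3
      _ = _ := by
        rw [mul_assoc 2, ENNReal.ofReal_mul (by norm_num : (0:ℝ) ≤ 2), ENNReal.ofReal_ofNat, Kb]
        ring
  refine (mul_le_mul_right (lintegral_mono_ae step2) _).trans ?_
  rw [lintegral_const_mul _ (by fun_prop),
    ← lintegral_sub_left_eq_self (fun w => ENNReal.ofReal (‖v - w‖ ^ γ * F w)) v]
  simp only [sub_sub_cancel]
  rw [← mul_assoc, ← mul_assoc]
  norm_num

lemma upper_gain (γ : ℝ) (hγ0 : 0 ≤ γ) (hγ2 : γ ≤ 2) (b : ℝ → ℝ) (hb : GradCutoff b)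
    (v : R3) (F : R3 → ℝ) (hF : Measurable F) (hF0 : ∀ x, 0 ≤ F x) (hF1 : ∀ x, F x ≤ 1) :
    ∫⁻ p, ENNReal.ofReal (Bker γ b v p.1 p.2 * (F (vOut v p.1 p.2) * F (vOutStar v p.1 p.2))) ∂Jm
      ≤ 64 * Kb b * ∫⁻ w, ENNReal.ofReal (‖v - w‖ ^ γ * F w) := by
  have hbm := hb.measurable
  have h1 := gain_half γ hγ0 hγ2 b hb v 1 (Or.inl rfl) F hF hF0
  have h2 := gain_half γ hγ0 hγ2 b hb v (-1) (Or.inr rfl) F hF hF0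
  have h3 := add_le_add h1 h2
  rw [← lintegral_add_left] at h3
  swap
  · exact (Measurable.indicator (by fun_prop) (measurableSet_le (by fun_prop) (by fun_prop)))
  refine le_trans (lintegral_mono ?_) (h3.trans (le_of_eq (by rw [← add_mul, ← add_mul]; norm_num)))
  rintro ⟨w, σ⟩
  simp only
  by_cases hc : ⟪v - w, (σ : R3)⟫ ≤ 0
  · refine le_trans ?_ (le_add_right le_rfl)
    rw [indicator_of_mem (show (w, σ) ∈ {p : R3 × S2 | ⟪v - p.1, (1:ℝ) • (p.2 : R3)⟫ ≤ 0} by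
      show ⟪v - w, (1:ℝ) • (σ : R3)⟫ ≤ 0; rwa [one_smul])]
    simp only [one_smul]
    apply ENNReal.ofReal_le_ofReal
    rw [← vOut_eq]
    have hB := Bker_nonneg γ b hb v w σ
    refine mul_le_mul_of_nonneg_left (mul_le_of_le_one_right (hF0 _) (hF1 _)) hB
  · refine le_trans ?_ (le_add_left le_rfl)
    rw [indicator_of_mem (show (w, σ) ∈ {p : R3 × S2 | ⟪v - p.1, (-1:ℝ) • (p.2 : R3)⟫ ≤ 0} by
      show ⟪v - w, (-1:ℝ) • (σ : R3)⟫ ≤ 0; rw [inner_smul_right]; linarith)]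
    apply ENNReal.ofReal_le_ofReal
    have hle : |⟪‖v - w‖⁻¹ • (v - w), (σ : R3)⟫| ≤ 1 := by
      refine (abs_real_inner_le_norm _ _).trans ?_
      rw [norm_smul, norm_inv, norm_norm]
      simp only [norm_eq_of_mem_sphere, mul_one]
      exact inv_mul_le_one
    have hbb : b ⟪‖v - w‖⁻¹ • (v - w), (-1:ℝ) • (σ : R3)⟫ = b (cosAngle v w σ) := by
      rw [inner_smul_right, neg_one_mul, b_even b hb _ hle, cosAngle]
    simp only
    rw [hbb, neg_one_smul, ← vOutStar_eq]
    have hB := Bker_nonneg γ b hb v w σ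
    refine mul_le_mul_of_nonneg_left (mul_le_of_le_one_left (hF0 _) (hF1 _)) hB


/-- Integrand of the trilinear rate. -/
def Pint (γ : ℝ) (b : ℝ → ℝ) (p q : R3 → ℝ) (v : R3) (x : R3 × S2) : ℝ :=
  Bker γ b v x.1 x.2 * (p (vOut v x.1 x.2) * p (vOutStar v x.1 x.2) * q x.1)

/-- Trilinear rate. -/
def Prate (γ : ℝ) (b : ℝ → ℝ) (p q : R3 → ℝ) (v : R3) : ℝ :=
  ∫ x, Pint γ b p q v x ∂Jm

lemma measurable_Pint (γ : ℝ) (b : ℝ → ℝ) (hb : GradCutoff b) (p q : R3 → ℝ) (hp : Measurable p)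
    (hq : Measurable q) (v : R3) : Measurable (Pint γ b p q v) := by
  have := measurable_Bker γ b hb.measurable (v := fun _ : R3 × S2 => v) (w := fun p => p.1)
    (s := fun p => p.2) (by fun_prop) (by fun_prop) (by fun_prop)
  unfold Pint
  fun_prop

lemma Pint_nonneg (γ : ℝ) (b : ℝ → ℝ) (hb : GradCutoff b) (p q : R3 → ℝ) (hp : ∀ x, 0 ≤ p x)
    (hq : ∀ x, 0 ≤ q x) (v : R3) (x : R3 × S2) : 0 ≤ Pint γ b p q v x :=
  mul_nonneg (Bker_nonneg γ b hb _ _ _) (mul_nonneg (mul_nonneg (hp _) (hp _)) (hq _))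

lemma weight_bound (γ : ℝ) (hγ0 : 0 ≤ γ) (hγ2 : γ ≤ 2) (v w : R3) :
    ‖v - w‖ ^ γ ≤ 2 * (1 + ‖v‖ ^ 2) * (1 + ‖w‖ ^ 2) := by
  have h1 : ‖v - w‖ ^ γ ≤ 1 + ‖v - w‖ ^ 2 := by
    rcases le_total (‖v - w‖) 1 with h | h
    · have := rpow_le_one (norm_nonneg (v - w)) h hγ0
      nlinarith [sq_nonneg ‖v - w‖]
    · have := rpow_le_rpow_of_exponent_le h hγ2
      rw [rpow_two] at this
      linarith
  have h2 := norm_sub_le v w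
  have h3 : ‖v - w‖ ^ 2 ≤ (‖v‖ + ‖w‖) ^ 2 := by gcongr
  nlinarith [sq_nonneg (‖v‖ - ‖w‖), sq_nonneg (‖v‖ * ‖w‖)]

lemma mem_int (f : R3 → ℝ) (hf : Measurable f) (hf0 : ∀ x, 0 ≤ f x) (h : MemL1s 2 f) :
    Integrable f ∧ Integrable (fun w => f w * ‖w‖ ^ 2) := by
  unfold MemL1s at h
  constructor
  · refine h.mono' hf.aestronglyMeasurable (ae_of_all _ fun w => ?_)
    rw [Real.norm_eq_abs]
    have : (1 + ‖w‖ ^ 2) ^ ((2:ℝ) / 2) = 1 + ‖w‖ ^ 2 := by norm_num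
    rw [this]
    nlinarith [abs_nonneg (f w), mul_nonneg (abs_nonneg (f w)) (sq_nonneg ‖w‖)]
  · refine h.mono' (by fun_prop) (ae_of_all _ fun w => ?_)
    rw [Real.norm_eq_abs, abs_mul, abs_of_nonneg (sq_nonneg ‖w‖)]
    have : (1 + ‖w‖ ^ 2) ^ ((2:ℝ) / 2) = 1 + ‖w‖ ^ 2 := by norm_num
    rw [this]
    nlinarith [abs_nonneg (f w)]

lemma weight_lint (γ : ℝ) (hγ0 : 0 ≤ γ) (hγ2 : γ ≤ 2) (v : R3) (f : R3 → ℝ) (hf : Measurable f)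
    (hf0 : ∀ x, 0 ≤ f x) (h : MemL1s 2 f) :
    ∫⁻ w, ENNReal.ofReal (‖v - w‖ ^ γ * f w) ≤
      ENNReal.ofReal (2 * (1 + ‖v‖ ^ 2) * (∫ w, f w + f w * ‖w‖ ^ 2)) := by
  obtain ⟨i1, i2⟩ := mem_int f hf hf0 h
  rw [← integral_const_mul, ofReal_integral_eq_lintegral_ofReal]
  · refine lintegral_mono fun w => ENNReal.ofReal_le_ofReal ?_
    have := mul_le_mul_of_nonneg_right (weight_bound γ hγ0 hγ2 v w) (hf0 w)
    linarith
  · exact (i1.add i2).const_mul _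
  · refine ae_of_all _ fun w => ?_
    have := hf0 w
    simp only [Pi.zero_apply]
    positivity

/-- uniform constant -/
lemma rate_bound (γ : ℝ) (hγ0 : 0 ≤ γ) (hγ2 : γ ≤ 2) (b : ℝ → ℝ) (hb : GradCutoff b)
    (M : ℝ) :
    ∃ K : ℝ, 0 < K ∧ ∀ f : R3 → ℝ, Measurable f → (∀ x, 0 ≤ f x) → (∀ x, f x ≤ 1) →
      MemL1s 2 f → (∫ w, f w) + (∫ w, f w * ‖w‖ ^ 2) ≤ M → ∀ v,
      ∫⁻ x, ENNReal.ofReal (Pint γ b f (fun w => 1 - f w) v x) ∂Jm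
          ≤ ENNReal.ofReal (K * (1 + ‖v‖ ^ 2)) ∧
      ∫⁻ x, ENNReal.ofReal (Pint γ b (fun w => 1 - f w) f v x) ∂Jm
          ≤ ENNReal.ofReal (K * (1 + ‖v‖ ^ 2)) := by
  set k := (Kb b).toReal with hk
  have hkb : Kb b = ENNReal.ofReal k := (ENNReal.ofReal_toReal (Kb_lt_top b hb).ne).symm
  have hk0 : 0 ≤ k := ENNReal.toReal_nonneg
  refine ⟨64 * k * 2 * |M| + 1, by positivity, ?_⟩
  intro f hf hf0 hf1 hm hM v
  have hw := weight_lint γ hγ0 hγ2 v f hf hf0 hm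
  obtain ⟨i1, i2⟩ := mem_int f hf hf0 hm
  rw [integral_add i1 i2] at hw
  have hw2 : 64 * Kb b * ∫⁻ w, ENNReal.ofReal (‖v - w‖ ^ γ * f w) ≤
      ENNReal.ofReal ((64 * k * 2 * |M| + 1) * (1 + ‖v‖ ^ 2)) := by
    calc _ ≤ 64 * Kb b * ENNReal.ofReal (2 * (1 + ‖v‖ ^ 2) * |M|) := by
          gcongr
          refine hw.trans (ENNReal.ofReal_le_ofReal ?_)
          gcongr
          exact hM.trans (le_abs_self M)
      _ = ENNReal.ofReal (64 * k * (2 * (1 + ‖v‖ ^ 2) * |M|)) := by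
          rw [hkb, ← ENNReal.ofReal_ofNat 64, ← ENNReal.ofReal_mul (by norm_num),
            ← ENNReal.ofReal_mul (by positivity)]
      _ ≤ _ := by
          apply ENNReal.ofReal_le_ofReal
          nlinarith [sq_nonneg ‖v‖]
  constructor
  · refine le_trans ?_ ((upper_gain γ hγ0 hγ2 b hb v f hf hf0 hf1).trans hw2)
    refine lintegral_mono fun x => ENNReal.ofReal_le_ofReal ?_
    unfold Pint
    refine mul_le_mul_of_nonneg_left ?_ (Bker_nonneg γ b hb _ _ _)
    refine mul_le_of_le_one_right (mul_nonneg (hf0 _) (hf0 _)) ?_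
    linarith [hf0 x.1]
  · have hl : ∫⁻ x, ENNReal.ofReal (Bker γ b v x.1 x.2 * f x.1) ∂Jm ≤
        64 * Kb b * ∫⁻ w, ENNReal.ofReal (‖v - w‖ ^ γ * f w) := by
      rw [upper_loss γ b hb v f hf, mul_assoc]
      exact le_mul_of_one_le_left zero_le (by norm_num)
    refine le_trans ?_ (hl.trans hw2)
    refine lintegral_mono fun x => ENNReal.ofReal_le_ofReal ?_
    unfold Pint
    refine mul_le_mul_of_nonneg_left ?_ (Bker_nonneg γ b hb _ _ _)
    refine mul_le_of_le_one_left (hf0 _) ?_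
    refine mul_le_one₀ ?_ ?_ ?_ <;> linarith [hf0 (vOut v x.1 x.2), hf1 (vOut v x.1 x.2),
      hf0 (vOutStar v x.1 x.2), hf1 (vOutStar v x.1 x.2)]

lemma Pint_integrable (γ : ℝ) (b : ℝ → ℝ) (hb : GradCutoff b) (p q : R3 → ℝ) (hp : Measurable p)
    (hq : Measurable q) (hp0 : ∀ x, 0 ≤ p x) (hq0 : ∀ x, 0 ≤ q x) (v : R3) (C : ℝ)
    (h : ∫⁻ x, ENNReal.ofReal (Pint γ b p q v x) ∂Jm ≤ ENNReal.ofReal C) :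
    Integrable (Pint γ b p q v) Jm :=
  ⟨(measurable_Pint γ b hb p q hp hq v).aestronglyMeasurable, by
    rw [hasFiniteIntegral_iff_ofReal (ae_of_all _ (Pint_nonneg γ b hb p q hp0 hq0 v))]
    exact h.trans_lt ENNReal.ofReal_lt_top⟩

lemma Prate_nonneg (γ : ℝ) (b : ℝ → ℝ) (hb : GradCutoff b) (p q : R3 → ℝ)
    (hp0 : ∀ x, 0 ≤ p x) (hq0 : ∀ x, 0 ≤ q x) (v : R3) : 0 ≤ Prate γ b p q v :=
  integral_nonneg (Pint_nonneg γ b hb p q hp0 hq0 v)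

lemma Prate_le (γ : ℝ) (b : ℝ → ℝ) (hb : GradCutoff b) (p q : R3 → ℝ) (hp : Measurable p)
    (hq : Measurable q) (hp0 : ∀ x, 0 ≤ p x) (hq0 : ∀ x, 0 ≤ q x) (v : R3) (C : ℝ) (hC : 0 ≤ C)
    (h : ∫⁻ x, ENNReal.ofReal (Pint γ b p q v x) ∂Jm ≤ ENNReal.ofReal C) :
    Prate γ b p q v ≤ C := by
  unfold Prate
  rw [integral_eq_lintegral_of_nonneg_ae (ae_of_all _ (Pint_nonneg γ b hb p q hp0 hq0 v))
    (measurable_Pint γ b hb p q hp hq v).aestronglyMeasurable]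
  exact ENNReal.toReal_le_of_le_ofReal hC h

lemma QFD_eq (γ : ℝ) (b : ℝ → ℝ) (f : R3 → ℝ) (v : R3)
    (h1 : Integrable (Pint γ b f (fun w => 1 - f w) v) Jm)
    (h2 : Integrable (Pint γ b (fun w => 1 - f w) f v) Jm) :
    QFD γ b f v = (1 - f v) * Prate γ b f (fun w => 1 - f w) v
      - f v * Prate γ b (fun w => 1 - f w) f v := by
  unfold Prate
  rw [← integral_const_mul, ← integral_const_mul, ← integral_sub (h1.const_mul _) (h2.const_mul _)]
  unfold Jm at h1 h2 ⊢
  rw [integral_prod]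
  swap
  · exact (h1.const_mul _).sub (h2.const_mul _)
  unfold QFD
  congr 1; ext w
  congr 1; ext σ
  unfold Pint
  ring


lemma transfer_half (N : Set R3) (hNm : MeasurableSet N) (hN : volume N = 0) (e : ℝ) :
    ∀ᵐ v : R3, ∀ᵐ x ∂Jm, v - Tmap (e • (x.2 : R3)) (v - x.1) ∉ N := by
  have h1 : ∀ᵐ v : R3, ∀ᵐ y ∂Jm, v - Tmap (e • ((y : R3 × S2).2 : R3)) y.1 ∉ N := by
    rw [Measure.ae_ae_comm]
    · refine ae_of_all _ fun y => ?_
      have := (measurePreserving_sub_right (volume : Measure R3)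
        (Tmap (e • ((y : R3 × S2).2 : R3)) y.1)).quasiMeasurePreserving.ae (p := fun u => u ∉ N)
        (by rw [ae_iff]; simpa using hN)
      exact this
    · have : Measurable (fun z : R3 × (R3 × S2) => z.1 - Tmap (e • (z.2.2 : R3)) z.2.1) := by
        fun_prop
      exact this hNm.compl
  filter_upwards [h1] with v hv
  have := ((Measure.measurePreserving_sub_left (volume : Measure R3) v).prod
    (MeasurePreserving.id sphMeasure)).quasiMeasurePreserving.ae hv
  exact this

lemma ae_good_set (N : Set R3) (hN : volume N = 0) :
    ∀ᵐ v : R3, ∀ᵐ x ∂Jm, vOut v x.1 x.2 ∉ N ∧ vOutStar v x.1 x.2 ∉ N ∧ x.1 ∉ N := by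
  have hm := measurableSet_toMeasurable volume N
  have h0 : volume (toMeasurable volume N) = 0 := by rw [measure_toMeasurable, hN]
  have hx : ∀ᵐ x ∂Jm, (x : R3 × S2).1 ∉ toMeasurable volume N := by
    have : ∀ᵐ w : R3, w ∉ toMeasurable volume N := by rw [ae_iff]; simpa using h0
    exact Measure.quasiMeasurePreserving_fst.ae this
  filter_upwards [transfer_half _ hm h0 1, transfer_half _ hm h0 (-1)] with v h1 h2
  filter_upwards [h1, h2, hx] with x a1 a2 a3
  refine ⟨fun h => a1 ?_, fun h => a2 ?_, fun h => a3 (subset_toMeasurable _ _ h)⟩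
  · rw [one_smul, ← vOut_eq]; exact subset_toMeasurable _ _ h
  · rw [neg_one_smul, ← vOutStar_eq]; exact subset_toMeasurable _ _ h

lemma ae_good (P : R3 → Prop) (hP : ∀ᵐ u, P u) :
    ∀ᵐ v : R3, ∀ᵐ x ∂Jm, P (vOut v x.1 x.2) ∧ P (vOutStar v x.1 x.2) ∧ P x.1 := by
  have := ae_good_set {u | ¬ P u} hP
  simpa using this

/-- Joint-in-time version. -/
lemma ae_good_time (μ : Measure ℝ) [SFinite μ] (P : ℝ × R3 → Prop) (hP : ∀ᵐ y ∂(μ.prod volume), P y) :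
    ∀ᵐ v : R3, ∀ᵐ τ ∂μ, ∀ᵐ x ∂Jm, P (τ, vOut v x.1 x.2) ∧ P (τ, vOutStar v x.1 x.2) ∧ P (τ, x.1) := by
  set E := toMeasurable (μ.prod volume) {y | ¬ P y} with hE
  have hm : MeasurableSet E := measurableSet_toMeasurable _ _
  have h0 : (μ.prod volume) E = 0 := by rw [hE, measure_toMeasurable]; exact hP
  have hsub : ∀ y, y ∉ E → P y := fun y hy => by
    by_contra h; exact hy (subset_toMeasurable _ _ h)
  have h1 : ∀ᵐ τ ∂μ, ∀ᵐ u : R3, (τ, u) ∉ E := by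
    refine Measure.ae_ae_of_ae_prod (p := fun y => y ∉ E) ?_
    rw [ae_iff]; simpa using h0
  have h2 : ∀ᵐ τ ∂μ, ∀ᵐ v : R3, ∀ᵐ x ∂Jm, (τ, vOut v x.1 x.2) ∉ E ∧ (τ, vOutStar v x.1 x.2) ∉ E
      ∧ (τ, x.1) ∉ E := by
    filter_upwards [h1] with τ hτ
    exact ae_good (fun u => (τ, u) ∉ E) hτ
  have hm2 : MeasurableSet {z : (ℝ × R3) × (R3 × S2) | ((z.1.1, vOut z.1.2 z.2.1 z.2.2) ∉ E ∧
      (z.1.1, vOutStar z.1.2 z.2.1 z.2.2) ∉ E ∧ (z.1.1, z.2.1) ∉ E)} := by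
    refine MeasurableSet.inter ?_ (MeasurableSet.inter ?_ ?_)
    · exact (show Measurable fun z : (ℝ × R3) × (R3 × S2) => (z.1.1, vOut z.1.2 z.2.1 z.2.2)
        by fun_prop) hm.compl
    · exact (show Measurable fun z : (ℝ × R3) × (R3 × S2) => (z.1.1, vOutStar z.1.2 z.2.1 z.2.2)
        by fun_prop) hm.compl
    · exact (show Measurable fun z : (ℝ × R3) × (R3 × S2) => (z.1.1, z.2.1)
        by fun_prop) hm.compl
  have h3 : ∀ᵐ v : R3, ∀ᵐ τ ∂μ, ∀ᵐ x ∂Jm, (τ, vOut v x.1 x.2) ∉ E ∧ (τ, vOutStar v x.1 x.2) ∉ E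
      ∧ (τ, x.1) ∉ E := by
    rw [← Measure.ae_ae_comm]
    · exact h2
    · have := measurable_measure_prodMk_left (ν := Jm) hm2.compl
      exact this (measurableSet_singleton 0)
  filter_upwards [h3] with v hv
  filter_upwards [hv] with τ hτ
  filter_upwards [hτ] with x hx
  exact ⟨hsub _ hx.1, hsub _ hx.2.1, hsub _ hx.2.2⟩

lemma meas_step (f : ℝ → R3 → ℝ) (hm : ∀ t, Measurable (f t)) (c : ℝ) (a : ℤ → ℝ) :
    Measurable (fun y : ℝ × R3 => f (a ⌊c * y.1⌋) y.2) := by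
  have h1 : Measurable (fun z : ℤ × R3 => f (a z.1) z.2) :=
    measurable_from_prod_countable_right (fun k => hm (a k))
  have h2 : Measurable (fun y : ℝ × R3 => ((⌊c * y.1⌋ : ℤ), y.2)) := by fun_prop
  exact h1.comp h2

lemma tendsto_floor1 (t : ℝ) : Filter.Tendsto (fun n : ℕ => ((⌊((n:ℝ)+1) * t⌋ : ℤ) : ℝ) / ((n:ℝ)+1))
    Filter.atTop (nhds t) := by
  have h := tendsto_one_div_add_atTop_nhds_zero_nat (𝕜 := ℝ)
  have h2 := (tendsto_const_nhds (x := t)).sub h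
  rw [sub_zero] at h2
  refine tendsto_of_tendsto_of_tendsto_of_le_of_le h2 tendsto_const_nhds ?_ ?_
  · intro n
    have hn : (0:ℝ) < (n:ℝ) + 1 := by positivity
    simp only
    rw [le_div_iff₀ hn, sub_mul, one_div, inv_mul_cancel₀ hn.ne']
    have := Int.lt_floor_add_one (((n:ℝ)+1) * t)
    linarith
  · intro n
    have hn : (0:ℝ) < (n:ℝ) + 1 := by positivity
    simp only
    rw [div_le_iff₀ hn]
    have := Int.floor_le (((n:ℝ)+1) * t)
    linarith

lemma tendsto_floor2 (t : ℝ) : Filter.Tendsto (fun n : ℕ => (((⌊((n:ℝ)+1) * t⌋ : ℤ) : ℝ) + 1) / ((n:ℝ)+1))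
    Filter.atTop (nhds t) := by
  have h := (tendsto_floor1 t).add (tendsto_one_div_add_atTop_nhds_zero_nat (𝕜 := ℝ))
  rw [add_zero] at h
  refine h.congr fun n => ?_
  rw [← add_div]

lemma joint_meas (f : ℝ → R3 → ℝ) (hm : ∀ t, Measurable (f t)) (Z : Set R3) (hZ : volume Z = 0)
    (T0 : R3 → ℝ)
    (hA : ∀ v, v ∉ Z → ∀ t, 0 < t → ContinuousWithinAt (fun s => f s v) (Iic t) t ∨
      ContinuousWithinAt (fun s => f s v) (Ici t) t)
    (hB : ∀ v, v ∉ Z → ∀ t, 0 < t → t ≠ T0 v → ContinuousAt (fun s => f s v) t) :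
    ∃ h : ℝ × R3 → ℝ, Measurable h ∧
      ∀ᵐ y ∂((volume.restrict (Ioi (0:ℝ))).prod (volume : Measure R3)), f y.1 y.2 = h y := by
  set g1 : ℕ → ℝ × R3 → ℝ := fun n y => f (((⌊((n:ℝ)+1) * y.1⌋ : ℤ) : ℝ) / ((n:ℝ)+1)) y.2 with hg1
  set g2 : ℕ → ℝ × R3 → ℝ := fun n y => f ((((⌊((n:ℝ)+1) * y.1⌋ : ℤ) : ℝ) + 1) / ((n:ℝ)+1)) y.2 with hg2
  have m1 : ∀ n, Measurable (g1 n) := fun n => meas_step f hm _ (fun k => (k:ℝ) / ((n:ℝ)+1))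
  have m2 : ∀ n, Measurable (g2 n) := fun n => meas_step f hm _ (fun k => ((k:ℝ) + 1) / ((n:ℝ)+1))
  set h1 : ℝ × R3 → ℝ := fun y => Filter.limsup (fun n => g1 n y) Filter.atTop with hh1
  set h2 : ℝ × R3 → ℝ := fun y => Filter.limsup (fun n => g2 n y) Filter.atTop with hh2
  have mh1 : Measurable h1 := Measurable.limsup m1
  have mh2 : Measurable h2 := Measurable.limsup m2
  have l1 : ∀ y : ℝ × R3, ContinuousWithinAt (fun s => f s y.2) (Iic y.1) y.1 → h1 y = f y.1 y.2 := by
    intro y hy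
    refine Filter.Tendsto.limsup_eq ?_
    refine hy.tendsto.comp (tendsto_nhdsWithin_iff.2 ⟨tendsto_floor1 y.1, Filter.Eventually.of_forall fun n => ?_⟩)
    have hn : (0:ℝ) < (n:ℝ) + 1 := by positivity
    simp only [mem_Iic]
    rw [div_le_iff₀ hn]
    have := Int.floor_le (((n:ℝ)+1) * y.1)
    linarith
  have l2 : ∀ y : ℝ × R3, ContinuousWithinAt (fun s => f s y.2) (Ici y.1) y.1 → h2 y = f y.1 y.2 := by
    intro y hy
    refine Filter.Tendsto.limsup_eq ?_
    refine hy.tendsto.comp (tendsto_nhdsWithin_iff.2 ⟨tendsto_floor2 y.1, Filter.Eventually.of_forall fun n => ?_⟩)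
    have hn : (0:ℝ) < (n:ℝ) + 1 := by positivity
    simp only [mem_Ici]
    rw [le_div_iff₀ hn]
    have := Int.lt_floor_add_one (((n:ℝ)+1) * y.1)
    linarith
  have hZae : ∀ᵐ v : R3, v ∉ Z := by rw [ae_iff]; simpa using hZ
  have hE : ∀ᵐ y ∂((volume.restrict (Ioi (0:ℝ))).prod (volume : Measure R3)), h1 y = h2 y := by
    rw [Measure.ae_prod_iff_ae_ae (measurableSet_eq_fun mh1 mh2),
      Measure.ae_ae_comm (p := fun x y => h1 (x, y) = h2 (x, y)) (measurableSet_eq_fun mh1 mh2)]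
    filter_upwards [hZae] with v hv
    have : ∀ᵐ t : ℝ, t ≠ T0 v := by rw [ae_iff]; simp
    filter_upwards [ae_restrict_of_ae this, ae_restrict_mem measurableSet_Ioi] with t ht ht0
    have hc := hB v hv t ht0 ht
    rw [l1 (t, v) hc.continuousWithinAt, l2 (t, v) hc.continuousWithinAt]
  refine ⟨h1, mh1, ?_⟩
  have e1 : ∀ᵐ y ∂((volume.restrict (Ioi (0:ℝ))).prod (volume : Measure R3)), y.2 ∉ Z :=
    Measure.quasiMeasurePreserving_snd.ae hZae
  have e2 : ∀ᵐ y ∂((volume.restrict (Ioi (0:ℝ))).prod (volume : Measure R3)), y.1 ∈ Ioi (0:ℝ) :=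
    Measure.quasiMeasurePreserving_fst.ae (ae_restrict_mem measurableSet_Ioi)
  filter_upwards [hE, e1, e2] with y hy hyZ hy0
  rcases hA y.2 hyZ y.1 hy0 with hl | hr
  · exact (l1 y hl).symm
  · rw [hy]; exact (l2 y hr).symm


lemma prim_cont (u F : ℝ → ℝ) (c : ℝ) (hu : ∀ t, 0 ≤ t → u t = c + ∫ τ in (0:ℝ)..t, F τ)
    (t : ℝ) (ht : 0 ≤ t) (hI : IntervalIntegrable F volume 0 t) : ContinuousOn u (Icc 0 t) := by
  have h1 : IntegrableOn F (uIcc 0 t) := by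
    rw [uIcc_of_le ht, integrableOn_Icc_iff_integrableOn_Ioc]
    exact (intervalIntegrable_iff_integrableOn_Ioc_of_le ht).1 hI
  have h2 := intervalIntegral.continuousOn_primitive_interval h1
  rw [uIcc_of_le ht] at h2
  exact (continuousOn_const.add h2).congr fun s hs => hu s hs.1

lemma prim_const (u F : ℝ → ℝ) (c : ℝ) (hu : ∀ t, 0 ≤ t → u t = c + ∫ τ in (0:ℝ)..t, F τ)
    (t : ℝ) (ht : 0 ≤ t) (hI : ¬ IntervalIntegrable F volume 0 t) (s : ℝ) (hs : t ≤ s) : u s = c := by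
  rw [hu s (ht.trans hs), intervalIntegral.integral_undef, add_zero]
  intro h
  apply hI
  refine h.mono_set ?_
  rw [uIcc_of_le ht, uIcc_of_le (ht.trans hs)]
  exact Icc_subset_Icc_right hs

lemma prim_A (u F : ℝ → ℝ) (c : ℝ) (hu : ∀ t, 0 ≤ t → u t = c + ∫ τ in (0:ℝ)..t, F τ)
    (t : ℝ) (ht : 0 < t) : ContinuousWithinAt u (Iic t) t ∨ ContinuousWithinAt u (Ici t) t := by
  by_cases hI : IntervalIntegrable F volume 0 t
  · left
    have := (prim_cont u F c hu t ht.le hI) t ⟨ht.le, le_rfl⟩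
    refine this.mono_of_mem_nhdsWithin ?_
    exact Icc_mem_nhdsLE ht
  · right
    refine (continuousWithinAt_const (b := c)).congr (fun s hs => ?_) ?_
    · exact prim_const u F c hu t ht.le hI s hs
    · exact prim_const u F c hu t ht.le hI t le_rfl

lemma prim_B (u F : ℝ → ℝ) (c : ℝ) (hu : ∀ t, 0 ≤ t → u t = c + ∫ τ in (0:ℝ)..t, F τ) :
    ∃ T0 : ℝ, ∀ t, 0 < t → t ≠ T0 → ContinuousAt u t := by
  refine ⟨sSup {t | 0 ≤ t ∧ IntervalIntegrable F volume 0 t}, fun t ht htne => ?_⟩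
  set S := {t | 0 ≤ t ∧ IntervalIntegrable F volume 0 t} with hS
  have h0 : (0:ℝ) ∈ S := ⟨le_rfl, by simp⟩
  by_cases h : ∃ t' > t, IntervalIntegrable F volume 0 t'
  · obtain ⟨t', ht', hI⟩ := h
    exact (prim_cont u F c hu t' (ht.trans ht').le hI).continuousAt (Icc_mem_nhds ht ht')
  · push Not at h
    have hub : t ∈ upperBounds S := by
      intro s hs
      by_contra hlt
      exact h s (not_le.1 hlt) hs.2
    have hle : sSup S ≤ t := csSup_le ⟨0, h0⟩ hub
    have hlt : sSup S < t := lt_of_le_of_ne hle htne.symm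
    have hge : 0 ≤ sSup S := le_csSup ⟨t, hub⟩ h0
    set s := (sSup S + t) / 2 with hs
    have hs1 : sSup S < s := by rw [hs]; linarith
    have hs2 : s < t := by rw [hs]; linarith
    have hnI : ¬ IntervalIntegrable F volume 0 s := by
      intro hI
      have : s ≤ sSup S := le_csSup ⟨t, hub⟩ ⟨by linarith, hI⟩
      linarith
    refine (continuousAt_const (y := c)).congr ?_
    filter_upwards [Ioi_mem_nhds hs2] with x hx
    exact (prim_const u F c hu s (by linarith) hnI x (le_of_lt hx)).symm

lemma prate_meas (γ : ℝ) (b : ℝ → ℝ) (hb : GradCutoff b) (p q : ℝ × R3 → ℝ) (hp : Measurable p)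
    (hq : Measurable q) (v : R3) :
    StronglyMeasurable fun τ : ℝ => Prate γ b (fun u => p (τ, u)) (fun u => q (τ, u)) v := by
  unfold Prate
  have := measurable_Bker γ b hb.measurable (v := fun _ : ℝ × (R3 × S2) => v) (w := fun p => p.2.1)
    (s := fun p => p.2.2) (by fun_prop) (by fun_prop) (by fun_prop)
  refine StronglyMeasurable.integral_prod_right (ν := Jm)
    (f := fun z : ℝ => fun x => Pint γ b (fun u => p (z, u)) (fun u => q (z, u)) v x) ?_
  apply Measurable.stronglyMeasurable
  unfold Pint Function.uncurry
  fun_prop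

lemma sol_ode (γ : ℝ) (hγ0 : 0 ≤ γ) (hγ2 : γ ≤ 2) (b : ℝ → ℝ) (hb : GradCutoff b)
    (f₀ : R3 → ℝ) (f : ℝ → R3 → ℝ) (hf : IsFDSolution γ b f₀ f) :
    ∃ K : ℝ, 0 < K ∧
      (∀ t, 0 ≤ t → ∀ v, Integrable (Pint γ b (f t) (fun w => 1 - f t w) v) Jm ∧
        Integrable (Pint γ b (fun w => 1 - f t w) (f t) v) Jm ∧
        Prate γ b (f t) (fun w => 1 - f t w) v ≤ K * (1 + ‖v‖ ^ 2) ∧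
        Prate γ b (fun w => 1 - f t w) (f t) v ≤ K * (1 + ‖v‖ ^ 2)) ∧
      ∀ᵐ v : R3, f 0 v = f₀ v ∧ ContinuousOn (fun t => f t v) (Ici 0) ∧
        (∀ a c, 0 ≤ a → a ≤ c →
          IntervalIntegrable (fun τ => Prate γ b (f τ) (fun w => 1 - f τ w) v) volume a c ∧
          IntervalIntegrable (fun τ => Prate γ b (fun w => 1 - f τ w) (f τ) v) volume a c ∧
          f c v - f a v = ∫ τ in a..c, ((1 - f τ v) * Prate γ b (f τ) (fun w => 1 - f τ w) v
            - f τ v * Prate γ b (fun w => 1 - f τ w) (f τ) v)) := by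
  obtain ⟨K, hK, hKb⟩ := rate_bound γ hγ0 hγ2 b hb ((∫ w, f₀ w) + ∫ w, f₀ w * ‖w‖ ^ 2)
  obtain ⟨Z, hZ, hmild⟩ := hf.mild
  have hsub : ∀ t, 0 ≤ t → ∀ x, 0 ≤ 1 - f t x := fun t ht x => by linarith [hf.le_one t ht x]
  have hmeas1 : ∀ t, Measurable fun w => 1 - f t w := fun t => (measurable_const.sub (hf.measurable t))
  have hbd : ∀ t, 0 ≤ t → ∀ v, Integrable (Pint γ b (f t) (fun w => 1 - f t w) v) Jm ∧
        Integrable (Pint γ b (fun w => 1 - f t w) (f t) v) Jm ∧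
        Prate γ b (f t) (fun w => 1 - f t w) v ≤ K * (1 + ‖v‖ ^ 2) ∧
        Prate γ b (fun w => 1 - f t w) (f t) v ≤ K * (1 + ‖v‖ ^ 2) := by
    intro t ht v
    obtain ⟨h1, h2⟩ := hKb (f t) (hf.measurable t) (hf.nonneg t ht) (hf.le_one t ht) (hf.memL12 t ht)
      (by rw [hf.mass t ht, hf.energy t ht]) v
    exact ⟨Pint_integrable γ b hb _ _ (hf.measurable t) (hmeas1 t) (hf.nonneg t ht) (hsub t ht) v _ h1,
      Pint_integrable γ b hb _ _ (hmeas1 t) (hf.measurable t) (hsub t ht) (hf.nonneg t ht) v _ h2,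
      Prate_le γ b hb _ _ (hf.measurable t) (hmeas1 t) (hf.nonneg t ht) (hsub t ht) v _
        (by positivity) h1,
      Prate_le γ b hb _ _ (hmeas1 t) (hf.measurable t) (hsub t ht) (hf.nonneg t ht) v _
        (by positivity) h2⟩
  refine ⟨K, hK, hbd, ?_⟩
  have hT : ∀ v : R3, ∃ T0 : ℝ, v ∉ Z → ∀ t, 0 < t → t ≠ T0 → ContinuousAt (fun s => f s v) t := by
    intro v
    by_cases hv : v ∈ Z
    · exact ⟨0, fun h => absurd hv h⟩
    · obtain ⟨T, hT⟩ := prim_B (fun t => f t v) _ _ (fun t ht => hmild t ht v hv)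
      exact ⟨T, fun _ => hT⟩
  choose T0 hT0 using hT
  obtain ⟨h, hhm, hhe⟩ := joint_meas f hf.measurable Z hZ T0
    (fun v hv t ht => prim_A (fun t => f t v) _ _ (fun t ht => hmild t ht v hv) t ht) hT0
  have hZae : ∀ᵐ v : R3, v ∉ Z := by rw [ae_iff]; simpa using hZ
  have hg := ae_good_time (volume.restrict (Ioi (0:ℝ))) (fun y => f y.1 y.2 = h y) hhe
  have hfae : ∀ᵐ v : R3, ∀ᵐ τ ∂(volume.restrict (Ioi (0:ℝ))), f τ v = h (τ, v) := by
    have : ∀ᵐ y ∂((volume : Measure R3).prod (volume.restrict (Ioi (0:ℝ)))),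
      f y.2 y.1 = h (y.2, y.1) := Measure.measurePreserving_swap.quasiMeasurePreserving.ae hhe
    exact Measure.ae_ae_of_ae_prod this
  filter_upwards [hZae, hg, hfae] with v hv hgv hfv
  have hIoc : ∀ a c : ℝ, 0 ≤ a → Ioc a c ⊆ Ioi 0 := fun a c ha x hx => lt_of_le_of_lt ha hx.1
  have key : ∀ (P : ℝ → ℝ) (C : ℝ), AEStronglyMeasurable P (volume.restrict (Ioi (0:ℝ))) →
      (∀ t, 0 ≤ t → |P t| ≤ C) → ∀ a c, 0 ≤ a → a ≤ c → IntervalIntegrable P volume a c := by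
    intro P C hP hC a c ha hac
    rw [intervalIntegrable_iff_integrableOn_Ioc_of_le hac]
    refine Integrable.mono' (g := fun _ => C) (integrable_const C)
      (hP.mono_measure (Measure.restrict_mono (hIoc a c ha) le_rfl)) ?_
    filter_upwards [ae_restrict_mem measurableSet_Ioc] with x hx
    exact hC x (ha.trans hx.1.le)
  have mG : AEStronglyMeasurable (fun τ => Prate γ b (f τ) (fun w => 1 - f τ w) v)
      (volume.restrict (Ioi (0:ℝ))) := by
    refine ⟨_, prate_meas γ b hb h (fun y => 1 - h y) hhm (by fun_prop) v, ?_⟩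
    filter_upwards [hgv] with τ hτ
    unfold Prate
    refine integral_congr_ae ?_
    filter_upwards [hτ] with x hx
    unfold Pint

    simp only [hx.1, hx.2.1, hx.2.2]
  have mL : AEStronglyMeasurable (fun τ => Prate γ b (fun w => 1 - f τ w) (f τ) v)
      (volume.restrict (Ioi (0:ℝ))) := by
    refine ⟨_, prate_meas γ b hb (fun y => 1 - h y) h (by fun_prop) hhm v, ?_⟩
    filter_upwards [hgv] with τ hτ
    unfold Prate
    refine integral_congr_ae ?_
    filter_upwards [hτ] with x hx
    unfold Pint

    simp only [hx.1, hx.2.1, hx.2.2]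
  have mf : AEStronglyMeasurable (fun τ => f τ v) (volume.restrict (Ioi (0:ℝ))) :=
    ⟨fun τ => h (τ, v), (hhm.comp measurable_prodMk_right).stronglyMeasurable, hfv⟩
  have bG : ∀ t, 0 ≤ t → |Prate γ b (f t) (fun w => 1 - f t w) v| ≤ K * (1 + ‖v‖ ^ 2) := by
    intro t ht
    rw [abs_of_nonneg (Prate_nonneg γ b hb _ _ (hf.nonneg t ht) (hsub t ht) v)]
    exact (hbd t ht v).2.2.1
  have bL : ∀ t, 0 ≤ t → |Prate γ b (fun w => 1 - f t w) (f t) v| ≤ K * (1 + ‖v‖ ^ 2) := by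
    intro t ht
    rw [abs_of_nonneg (Prate_nonneg γ b hb _ _ (hsub t ht) (hf.nonneg t ht) v)]
    exact (hbd t ht v).2.2.2
  have hR : ∀ a c, 0 ≤ a → a ≤ c → IntervalIntegrable
      (fun τ => ((1 - f τ v) * Prate γ b (f τ) (fun w => 1 - f τ w) v
            - f τ v * Prate γ b (fun w => 1 - f τ w) (f τ) v)) volume a c := by
    refine key _ (1 * (K * (1 + ‖v‖ ^ 2)) + 1 * (K * (1 + ‖v‖ ^ 2)))
      (((aestronglyMeasurable_const.sub mf).mul mG).sub (mf.mul mL)) ?_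
    intro t ht
    refine (abs_sub _ _).trans ?_
    rw [abs_mul, abs_mul]
    have f0 := hf.nonneg t ht v
    have f1 := hf.le_one t ht v
    gcongr
    · rw [abs_of_nonneg (by linarith)]; linarith
    · exact bG t ht
    · rw [abs_of_nonneg (by linarith)]; linarith
    · exact bL t ht
  have hQ : ∀ t, 0 ≤ t → QFD γ b (f t) v = ((1 - f t v) * Prate γ b (f t) (fun w => 1 - f t w) v
            - f t v * Prate γ b (fun w => 1 - f t w) (f t) v) := fun t ht =>
    QFD_eq γ b (f t) v (hbd t ht v).1 (hbd t ht v).2.1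
  have hu : ∀ t, 0 ≤ t → f t v = f₀ v + ∫ τ in (0:ℝ)..t,
      ((1 - f τ v) * Prate γ b (f τ) (fun w => 1 - f τ w) v
            - f τ v * Prate γ b (fun w => 1 - f τ w) (f τ) v) := by
    intro t ht
    rw [hmild t ht v hv]
    congr 1
    refine intervalIntegral.integral_congr fun τ hτ => ?_
    rw [uIcc_of_le ht] at hτ
    exact hQ τ hτ.1
  refine ⟨?_, ?_, ?_⟩
  · rw [hu 0 le_rfl]; simp
  · intro t ht
    have h1 := prim_cont (fun t => f t v) _ _ hu (t + 1) (by linarith [mem_Ici.1 ht])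
      (hR 0 (t+1) le_rfl (by linarith [mem_Ici.1 ht])) t ⟨ht, by linarith⟩
    refine h1.mono_of_mem_nhdsWithin ?_
    rw [mem_nhdsWithin]
    refine ⟨Iio (t+1), isOpen_Iio, by simp, fun x hx => ⟨hx.2, le_of_lt hx.1⟩⟩
  · intro a c ha hac
    refine ⟨key _ _ mG bG a c ha hac, key _ _ mL bL a c ha hac, ?_⟩
    rw [hu a ha, hu c (ha.trans hac)]
    rw [← intervalIntegral.integral_add_adjacent_intervals (hR 0 a le_rfl ha) (hR a c ha hac)]
    ring


lemma decay_step (u : ℝ → ℝ) (ℓ : ℝ) (hℓ : 0 ≤ ℓ) (a c : ℝ) (hac : a ≤ c) (hs : ℓ * (c - a) ≤ 1/2)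
    (hu : ContinuousOn u (Icc a c)) (h0 : ∀ t ∈ Icc a c, 0 ≤ u t)
    (h : ∀ x ∈ Icc a c, u x - ℓ * ∫ τ in x..c, u τ ≤ u c) : u a / 2 ≤ u c := by
  obtain ⟨x, hx, hmax⟩ := isCompact_Icc.exists_isMaxOn (nonempty_Icc.2 hac) hu
  have h1 := h x hx
  have h2 : ∫ τ in x..c, u τ ≤ ∫ τ in x..c, u x := by
    refine intervalIntegral.integral_mono_on hx.2 ?_ (by simp) ?_
    · refine ContinuousOn.intervalIntegrable_of_Icc hx.2 (hu.mono (Icc_subset_Icc_left hx.1))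
    · intro y hy
      exact hmax ⟨hx.1.trans hy.1, hy.2⟩
  rw [intervalIntegral.integral_const, smul_eq_mul] at h2
  have h3 : u a ≤ u x := hmax ⟨le_rfl, hac⟩
  have h4 := h0 x hx
  have h5 : ℓ * ∫ τ in x..c, u τ ≤ ℓ * ((c - x) * u x) := by gcongr
  have h6 : ℓ * (c - x) ≤ 1/2 := by
    refine le_trans ?_ hs
    gcongr
    exact hx.1
  nlinarith

lemma decay (u : ℝ → ℝ) (ℓ : ℝ) (hℓ : 0 ≤ ℓ) (T : ℝ) (hT : 0 ≤ T) (n : ℕ) (hn : 0 < n)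
    (hs : ℓ * T ≤ n / 2)
    (hu : ContinuousOn u (Icc 0 T)) (h0 : ∀ t ∈ Icc 0 T, 0 ≤ u t)
    (h : ∀ a c, 0 ≤ a → a ≤ c → c ≤ T → u a - ℓ * ∫ τ in a..c, u τ ≤ u c) :
    (1/2) ^ n * u 0 ≤ u T := by
  have hn' : (0:ℝ) < n := by exact_mod_cast hn
  have key : ∀ k : ℕ, k ≤ n → (1/2) ^ k * u 0 ≤ u (k * (T / n)) := by
    intro k
    induction k with
    | zero => intro _; simp
    | succ k ih =>
      intro hk
      have ih' := ih (by omega)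
      have hkn : ((k:ℝ) + 1) ≤ n := by exact_mod_cast hk
      have hd : 0 ≤ T / n := by positivity
      have hle : ((k:ℝ) + 1) * (T / n) ≤ T := by
        calc ((k:ℝ) + 1) * (T / n) ≤ n * (T / n) := by gcongr
          _ = T := by field_simp
      have h0k : 0 ≤ (k:ℝ) * (T / n) := by positivity
      have hkk : (k:ℝ) * (T / n) ≤ ((k:ℝ) + 1) * (T / n) := by gcongr; linarith
      have hsub : Icc ((k:ℝ) * (T / n)) (((k:ℝ) + 1) * (T / n)) ⊆ Icc 0 T := Icc_subset_Icc h0k hle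
      have := decay_step u ℓ hℓ (k * (T / n)) ((k + 1) * (T / n)) hkk (by
        have : ((k:ℝ) + 1) * (T / n) - k * (T / n) = T / n := by ring
        rw [this, ← mul_div_assoc, div_le_iff₀ hn']
        linarith) (hu.mono hsub) (fun t ht => h0 t (hsub ht))
        (fun x hx => h x _ (h0k.trans hx.1) hx.2 hle)
      push_cast
      rw [pow_succ]
      linarith
  have := key n le_rfl
  rwa [mul_div_cancel₀ _ hn'.ne'] at this

lemma creation (u : ℝ → ℝ) (ℓ g s t : ℝ) (hℓ : 0 ≤ ℓ) (hg : 0 ≤ g) (hgℓ : g ≤ ℓ) (hs : 0 < s)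
    (hs1 : s ≤ 1) (hu : ContinuousOn u (Icc (t - s) t)) (h0 : 0 ≤ u (t - s))
    (h : ∀ a c, t - s ≤ a → a ≤ c → c ≤ t → ∫ τ in a..c, (g - (g + ℓ) * u τ) ≤ u c - u a) :
    g * s / (1 + 2 * ℓ) ≤ u t := by
  set m := g * s / (1 + 2 * ℓ) with hm
  have hm0 : 0 ≤ m := by positivity
  have hmm : m ≤ s * (g - (g + ℓ) * m) := by
    have : m * (1 + 2 * ℓ) = g * s := by rw [hm]; field_simp
    have h2 : s * ((g + ℓ) * m) ≤ 2 * ℓ * m := by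
      calc s * ((g + ℓ) * m) ≤ 1 * ((ℓ + ℓ) * m) := by gcongr
        _ = _ := by ring
    linarith
  have hpos : 0 ≤ g - (g + ℓ) * m := by
    by_contra hneg
    have := mul_neg_of_pos_of_neg hs (not_le.1 hneg)
    linarith
  by_contra hlt
  rw [not_le] at hlt
  have step : ∀ x, t - s ≤ x → x ≤ t → (∀ y ∈ Ioo x t, u y ≤ m) → (t - x) * (g - (g + ℓ) * m) ≤ u t - u x := by
    intro x hx1 hx2 hy
    refine le_trans ?_ (h x t hx1 hx2 le_rfl)
    rw [← smul_eq_mul, ← intervalIntegral.integral_const]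
    have hc : ContinuousOn u (Icc x t) := hu.mono (Icc_subset_Icc_left hx1)
    refine intervalIntegral.integral_mono_on_of_le_Ioo hx2 (by simp) ?_ ?_
    · refine ContinuousOn.intervalIntegrable_of_Icc hx2 ?_
      fun_prop
    · intro y hy'
      have := hy y hy'
      gcongr
  by_cases hex : ∃ x ∈ Icc (t - s) t, m ≤ u x
  · set S := Icc (t - s) t ∩ u ⁻¹' Ici m with hS
    have hScl : IsCompact S := by
      have : IsClosed S := hu.preimage_isClosed_of_isClosed isClosed_Icc isClosed_Ici
      exact isCompact_Icc.of_isClosed_subset this inter_subset_left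
    have hne : S.Nonempty := by
      obtain ⟨x, hx, hxm⟩ := hex
      exact ⟨x, hx, hxm⟩
    have hmem := hScl.sSup_mem hne
    set x := sSup S
    have := step x hmem.1.1 hmem.1.2 (fun y hy => by
      by_contra hym
      have : y ≤ x := le_csSup hScl.bddAbove
        ⟨⟨hmem.1.1.trans hy.1.le, hy.2.le⟩, (not_le.1 hym).le⟩
      linarith [hy.1])
    have h1 : m ≤ u x := hmem.2
    have h2 : 0 ≤ (t - x) * (g - (g + ℓ) * m) := mul_nonneg (by linarith [hmem.1.2]) hpos
    linarith
  · push Not at hex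
    have := step (t - s) le_rfl (by linarith) (fun y hy => (hex y ⟨hy.1.le, hy.2.le⟩).le)
    have e : t - (t - s) = s := by ring
    rw [e] at this
    linarith


lemma geo_aux (V W s : R3) (hs : ‖s‖ = 1) (r κ : ℝ) (hκ : 0 < κ) (hr : 10 * κ ≤ r)
    (hV : ‖V‖ ≤ √2 * (r - κ)) (hW : ‖W‖ ≤ κ / 4)
    (hx : |⟪V - W, s⟫| ≤ ‖V - W‖ * (κ / (8 * r))) :
    ‖(2⁻¹ : ℝ) • (V + W) + (‖V - W‖ / 2) • s‖ ≤ r := by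
  have hr0 : 0 < r := by linarith
  have e1 : ‖(2⁻¹ : ℝ) • (V + W) + (‖V - W‖ / 2) • s‖ ^ 2
      = (‖V‖ ^ 2 + ‖W‖ ^ 2) / 2 + ‖V - W‖ / 2 * ⟪V - W, s⟫ + ‖V - W‖ * ⟪W, s⟫ := by
    have p1 := parallelogram_law_with_norm ℝ V W
    rw [norm_add_sq_real, norm_smul, norm_smul, hs, inner_smul_left, inner_smul_right, inner_add_left,
      inner_sub_left]
    simp only [norm_inv, Real.norm_ofNat, norm_div, norm_norm, conj_trivial]
    nlinarith [p1]
  have hsq : √2 ^ 2 = 2 := Real.sq_sqrt (by norm_num)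
  have hs2 : √2 ≤ 3 / 2 := by
    rw [Real.sqrt_le_left (by norm_num)]; norm_num
  have hVsq : ‖V‖ ^ 2 ≤ 2 * (r - κ) ^ 2 := by
    calc ‖V‖ ^ 2 ≤ (√2 * (r - κ)) ^ 2 := by gcongr
      _ = _ := by rw [mul_pow, hsq]
  have hVW : ‖V - W‖ ≤ 2 * r := by
    have h1 := norm_sub_le V W
    have h2 : √2 * (r - κ) ≤ 3 / 2 * (r - κ) := by
      apply mul_le_mul_of_nonneg_right hs2; linarith
    linarith
  have hin : ⟪W, s⟫ ≤ κ / 4 := by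
    have := real_inner_le_norm W s
    rw [hs, mul_one] at this
    linarith
  have hN := norm_nonneg (V - W)
  have hx' := (le_abs_self _).trans hx
  have t1 : ‖V - W‖ / 2 * ⟪V - W, s⟫ ≤ r * κ / 4 := by
    calc ‖V - W‖ / 2 * ⟪V - W, s⟫ ≤ ‖V - W‖ / 2 * (‖V - W‖ * (κ / (8 * r))) := by gcongr
      _ ≤ (2 * r) / 2 * ((2 * r) * (κ / (8 * r))) := by gcongr
      _ = r * κ / 4 := by field_simp; ring
  have t2 : ‖V - W‖ * ⟪W, s⟫ ≤ r * κ / 2 := by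
    calc ‖V - W‖ * ⟪W, s⟫ ≤ ‖V - W‖ * (κ / 4) := by gcongr
      _ ≤ (2 * r) * (κ / 4) := by gcongr
      _ = _ := by ring
  have hWsq : ‖W‖ ^ 2 ≤ (κ / 4) ^ 2 := by gcongr
  refine (abs_le_of_sq_le_sq' ?_ hr0.le).2
  rw [e1]
  nlinarith

lemma cos_lower (b : ℝ → ℝ) (c_b : ℝ) (hH2 : ∀ θ ∈ Icc (π/4) (3*π/4), c_b ≤ b (Real.cos θ))
    (x : ℝ) (hx : |x| ≤ 1/2) : c_b ≤ b x := by
  obtain ⟨h1, h2⟩ := abs_le.1 hx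
  have e : Real.cos (arccos x) = x := cos_arccos (by linarith) (by linarith)
  have hsq : (1:ℝ)/2 ≤ √2 / 2 := by
    have : (1:ℝ) ≤ √2 := by rw [Real.one_le_sqrt]; norm_num
    linarith
  have := hH2 (arccos x) ⟨?_, ?_⟩
  · rwa [e] at this
  · by_contra hlt
    rw [not_le] at hlt
    have := cos_lt_cos_of_nonneg_of_le_pi (arccos_nonneg x) (by linarith [pi_pos]) hlt
    rw [e, cos_pi_div_four] at this
    linarith
  · by_contra hlt
    rw [not_le] at hlt
    have := cos_lt_cos_of_nonneg_of_le_pi (by positivity) (arccos_le_pi x) hlt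
    have e2 : Real.cos (3 * π / 4) = -(√2 / 2) := by
      rw [← cos_pi_div_four, ← cos_pi_sub]; congr 1; ring
    rw [e, e2] at this
    linarith

lemma band_meas (v vbar : R3) (η x : ℝ) :
    MeasurableSet {y : R3 × S2 | ‖y.1 - vbar‖ ≤ η ∧ |cosAngle v y.1 y.2| ≤ x} := by
  have h1 : MeasurableSet {y : R3 × S2 | ‖y.1 - vbar‖ ≤ η} :=
    measurableSet_le (by fun_prop) (by fun_prop)
  have hc : Measurable fun y : R3 × S2 => cosAngle v y.1 y.2 := by fun_prop
  have h2 : MeasurableSet {y : R3 × S2 | |cosAngle v y.1 y.2| ≤ x} :=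
    measurableSet_le (by simpa using hc.norm) measurable_const
  exact h1.inter h2

lemma band_measure (v vbar : R3) (η x : ℝ) (hx0 : 0 < x) (hx1 : x < 1) (hv : η < ‖v - vbar‖) :
    Jm {y : R3 × S2 | ‖y.1 - vbar‖ ≤ η ∧ |cosAngle v y.1 y.2| ≤ x}
      = ENNReal.ofReal (2 * π * (2 * x)) * volume (Metric.closedBall vbar η) := by
  have hms : MeasurableSet {y : R3 × S2 | ‖y.1 - vbar‖ ≤ η ∧ |cosAngle v y.1 y.2| ≤ x} := band_meas _ _ _ _
  rw [Jm, Measure.prod_apply hms, ← setLIntegral_const, ← lintegral_indicator measurableSet_closedBall]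
  refine lintegral_congr fun w => ?_
  by_cases hw : ‖w - vbar‖ ≤ η
  · rw [indicator_of_mem (by rwa [mem_closedBall_iff_norm])]
    have hne : v - w ≠ 0 := by
      intro h
      rw [sub_eq_zero] at h
      rw [h] at hv; linarith
    have h1 : (Prod.mk w ⁻¹' {y : R3 × S2 | ‖y.1 - vbar‖ ≤ η ∧ |cosAngle v y.1 y.2| ≤ x})
        = {σ : S2 | ⟪‖v - w‖⁻¹ • (v - w), (σ : R3)⟫ ∈ Icc (-x) x} := by
      ext σ
      show (‖w - vbar‖ ≤ η ∧ |cosAngle v w σ| ≤ x) ↔ _ ∈ Icc (-x) x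
      rw [mem_Icc, ← abs_le]
      exact ⟨fun h => h.2, fun h => ⟨hw, h⟩⟩
    rw [h1, arch_set _ (unit_normalize _ hne) _ measurableSet_Icc,
      inter_eq_left.2 (Icc_subset_Ioo (by linarith) hx1), Real.volume_Icc,
      ← ENNReal.ofReal_mul (by positivity)]
    congr 1; ring
  · rw [indicator_of_notMem (by rwa [mem_closedBall_iff_norm])]
    have h1 : (Prod.mk w ⁻¹' {y : R3 × S2 | ‖y.1 - vbar‖ ≤ η ∧ |cosAngle v y.1 y.2| ≤ x}) = ∅ := by
      ext σ
      simp only [mem_empty_iff_false, iff_false]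
      exact fun h => hw h.1
    rw [h1, measure_empty]

lemma P_lower (γ : ℝ) (hγ0 : 0 ≤ γ) (b : ℝ → ℝ) (hb : GradCutoff b) (c_b : ℝ) (hc_b : 0 < c_b)
    (hH2 : ∀ θ ∈ Icc (π/4) (3*π/4), c_b ≤ b (Real.cos θ)) (p q : R3 → ℝ)
    (hp0 : ∀ x, 0 ≤ p x) (hq0 : ∀ x, 0 ≤ q x) (v vbar : R3) (δ r a a' : ℝ) (hδ : 0 < δ)
    (hr : δ ≤ r) (ha : 0 ≤ a) (ha' : 0 ≤ a')
    (hI : Integrable (Pint γ b p q v) Jm)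
    (hv1 : δ ≤ ‖v - vbar‖) (hv2 : ‖v - vbar‖ ≤ √2 * (r - δ / 10))
    (hgood : ∀ᵐ y ∂Jm, (‖vOut v y.1 y.2 - vbar‖ ≤ r → a ≤ p (vOut v y.1 y.2)) ∧
      (‖vOutStar v y.1 y.2 - vbar‖ ≤ r → a ≤ p (vOutStar v y.1 y.2)) ∧
      (‖y.1 - vbar‖ ≤ δ → a' ≤ q y.1)) :
    c_b * (δ / 2) ^ γ * (a * a * a') * (2 * π * (2 * (δ / (80 * r))) *
      (volume (Metric.closedBall vbar (δ / 40))).toReal) ≤ Prate γ b p q v := by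
  have hr0 : 0 < r := by linarith
  set x := δ / (80 * r) with hx
  have hx0 : 0 < x := by positivity
  have hx1 : x ≤ 1/80 := by
    rw [hx, div_le_div_iff₀ (by positivity) (by norm_num)]; linarith
  set S := {y : R3 × S2 | ‖y.1 - vbar‖ ≤ δ / 40 ∧ |cosAngle v y.1 y.2| ≤ x} with hS
  have hms : MeasurableSet S := band_meas _ _ _ _
  have hmu : Jm S = ENNReal.ofReal (2 * π * (2 * x)) * volume (Metric.closedBall vbar (δ / 40)) :=
    band_measure v vbar (δ / 40) x hx0 (by linarith) (by linarith)
  have hfin : Jm S ≠ ⊤ := by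
    rw [hmu]; exact ENNReal.mul_ne_top ENNReal.ofReal_ne_top measure_closedBall_lt_top.ne
  have hval : Jm.real S = 2 * π * (2 * x) * (volume (Metric.closedBall vbar (δ / 40))).toReal := by
    rw [Measure.real, hmu, ENNReal.toReal_mul, ENNReal.toReal_ofReal (by positivity)]
  rw [← hval]
  have h1 : ∫ y in S, Pint γ b p q v y ∂Jm ≤ Prate γ b p q v :=
    setIntegral_le_integral hI (ae_of_all _ (Pint_nonneg γ b hb p q hp0 hq0 v))
  refine le_trans ?_ h1
  rw [mul_comm _ (Jm.real S), ← smul_eq_mul, ← setIntegral_const]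
  refine setIntegral_mono_on_ae (by
    rw [integrableOn_const_iff]; right; exact lt_top_iff_ne_top.2 hfin) hI.integrableOn hms ?_
  filter_upwards [hgood] with y hy hyS
  obtain ⟨g1, g2, g3⟩ := hy
  obtain ⟨hw, hc⟩ := hyS
  obtain ⟨w, σ⟩ := y
  simp only at *
  have hσ : ‖(σ : R3)‖ = 1 := norm_eq_of_mem_sphere σ
  have hvw : δ / 2 ≤ ‖v - w‖ := by
    have : ‖v - vbar‖ ≤ ‖v - w‖ + ‖w - vbar‖ := norm_sub_le_norm_sub_add_norm_sub v w vbar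
    linarith
  have hvw0 : 0 < ‖v - w‖ := by linarith
  have hin : |⟪v - w, (σ : R3)⟫| ≤ ‖v - w‖ * x := by
    rw [cosAngle, inner_smul_left] at hc
    simp only [conj_trivial] at hc
    rw [abs_mul, abs_of_pos (inv_pos.2 hvw0), inv_mul_le_iff₀ hvw0] at hc
    exact hc
  have hxx : x = (δ / 10) / (8 * r) := by rw [hx]; field_simp; norm_num
  have hVW : (v - vbar) - (w - vbar) = v - w := by abel
  have hG : ∀ s : R3, ‖s‖ = 1 → |⟪v - w, s⟫| ≤ ‖v - w‖ * x →
      ‖(2⁻¹ : ℝ) • ((v - vbar) + (w - vbar)) + (‖v - w‖ / 2) • s‖ ≤ r := by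
    intro s hs hin
    have := geo_aux (v - vbar) (w - vbar) s hs r (δ / 10) (by positivity) (by linarith) hv2
      (by linarith) (by rw [hVW, ← hxx]; exact hin)
    rwa [hVW] at this
  have e1 : vOut v w σ - vbar = (2⁻¹ : ℝ) • ((v - vbar) + (w - vbar)) + (‖v - w‖ / 2) • (σ : R3) := by
    unfold vOut; module
  have e2 : vOutStar v w σ - vbar
      = (2⁻¹ : ℝ) • ((v - vbar) + (w - vbar)) + (‖v - w‖ / 2) • (-(σ : R3)) := by
    unfold vOutStar; module
  have p1 := g1 (by rw [e1]; exact hG _ hσ hin)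
  have p2 := g2 (by rw [e2]; exact hG _ (by rw [norm_neg]; exact hσ) (by rw [inner_neg_right, abs_neg]; exact hin))
  have p3 := g3 (by linarith)
  have pb := cos_lower b c_b hH2 (cosAngle v w σ) (by linarith)
  unfold Pint Bker
  simp only
  have hbn := hb.nonneg (cosAngle v w σ)
  have : c_b * (δ / 2) ^ γ ≤ ‖v - w‖ ^ γ * b (cosAngle v w σ) := by
    rw [mul_comm]; gcongr
  gcongr
  · exact mul_nonneg (hp0 _) (hp0 _)
  · exact hp0 _


/-- One of the two symmetric evolution systems (particles or holes). -/
structure RSys (γ : ℝ) (b : ℝ → ℝ) (K : ℝ) (p q : ℝ → R3 → ℝ) : Prop where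
  p0 : ∀ t, 0 ≤ t → ∀ v, 0 ≤ p t v
  q0 : ∀ t, 0 ≤ t → ∀ v, 0 ≤ q t v
  p1 : ∀ t, 0 ≤ t → ∀ v, p t v ≤ 1
  int : ∀ t, 0 ≤ t → ∀ v, Integrable (Pint γ b (p t) (q t) v) Jm
  rate1 : ∀ t, 0 ≤ t → ∀ v, Prate γ b (p t) (q t) v ≤ K * (1 + ‖v‖ ^ 2)
  rate2 : ∀ t, 0 ≤ t → ∀ v, Prate γ b (q t) (p t) v ≤ K * (1 + ‖v‖ ^ 2)
  ode : ∀ᵐ v : R3, ContinuousOn (fun t => p t v) (Ici 0) ∧ ∀ a c, 0 ≤ a → a ≤ c →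
    IntervalIntegrable (fun τ => Prate γ b (p τ) (q τ) v) volume a c ∧
    IntervalIntegrable (fun τ => Prate γ b (q τ) (p τ) v) volume a c ∧
    p c v - p a v = ∫ τ in a..c, ((1 - p τ v) * Prate γ b (p τ) (q τ) v
      - p τ v * Prate γ b (q τ) (p τ) v)

lemma RSys.ineq {γ : ℝ} {b : ℝ → ℝ} (hb : GradCutoff b) {K : ℝ} {p q : ℝ → R3 → ℝ}
    (h : RSys γ b K p q) (ℓ : ℝ) :
    ∀ᵐ v : R3, ContinuousOn (fun t => p t v) (Ici 0) ∧ (K * (1 + ‖v‖ ^ 2) ≤ ℓ →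
      ∀ g a c, 0 ≤ a → a ≤ c → (∀ τ ∈ Icc a c, g ≤ Prate γ b (p τ) (q τ) v) →
        ∫ τ in a..c, (g - (g + ℓ) * p τ v) ≤ p c v - p a v) := by
  filter_upwards [h.ode] with v hv
  refine ⟨hv.1, fun hℓ g a c ha hac hg => ?_⟩
  obtain ⟨i1, i2, e⟩ := hv.2 a c ha hac
  rw [e]
  have hc : ContinuousOn (fun t => p t v) (Icc a c) := hv.1.mono fun x hx => ha.trans hx.1
  have hc2 : ContinuousOn (fun t => p t v) (uIcc a c) := by rwa [uIcc_of_le hac]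
  refine intervalIntegral.integral_mono_on hac ?_ ?_ ?_
  · refine ContinuousOn.intervalIntegrable_of_Icc hac ?_
    fun_prop
  · refine IntervalIntegrable.sub (i1.continuousOn_mul ?_) (i2.continuousOn_mul hc2)
    fun_prop
  · intro τ hτ
    have ht : 0 ≤ τ := ha.trans hτ.1
    have q1 := h.p0 τ ht v
    have q2 := h.p1 τ ht v
    have q3 := hg τ hτ
    have q4 := (h.rate2 τ ht v).trans hℓ
    have m1 : (1 - p τ v) * g ≤ (1 - p τ v) * Prate γ b (p τ) (q τ) v :=
      mul_le_mul_of_nonneg_left q3 (by linarith)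
    have m2 : p τ v * Prate γ b (q τ) (p τ) v ≤ p τ v * ℓ := mul_le_mul_of_nonneg_left q4 q1
    linarith

lemma RSys.ball {γ : ℝ} {b : ℝ → ℝ} (hb : GradCutoff b) {K : ℝ} (hK : 0 < K) {p q : ℝ → R3 → ℝ}
    (h : RSys γ b K p q) (vbar : R3) (δ ε T : ℝ) (hδ : 0 < δ) (hε : 0 < ε) (hε1 : ε ≤ 1) (hT : 0 ≤ T)
    (hinit : ∀ᵐ v : R3, ‖v - vbar‖ ≤ δ → ε ≤ p 0 v) :
    ∃ ε', 0 < ε' ∧ ε' ≤ 1 ∧ ∀ᵐ v : R3, ∀ t ∈ Icc 0 T, ‖v - vbar‖ ≤ δ → ε' ≤ p t v := by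
  set ℓ := K * (1 + (‖vbar‖ + δ) ^ 2) with hℓ
  have hℓ0 : 0 ≤ ℓ := by positivity
  obtain ⟨n, hn⟩ := exists_nat_ge (2 * ℓ * T)
  refine ⟨(1/2) ^ (n+1) * ε, by positivity, ?_, ?_⟩
  · exact mul_le_one₀ (pow_le_one₀ (by norm_num) (by norm_num)) hε.le hε1
  filter_upwards [hinit, h.ineq hb ℓ] with v hv hi t ht hvb
  have hvn : ‖v‖ ≤ ‖vbar‖ + δ := by
    have := norm_le_norm_add_norm_sub' v vbar
    linarith
  have hi2 := hi.2 (by rw [hℓ]; gcongr) 0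
  have := decay (fun t => p t v) ℓ hℓ0 t ht.1 (n+1) (by omega) (by
    push_cast
    have : ℓ * t ≤ ℓ * T := by gcongr; exact ht.2
    linarith) (hi.1.mono fun x hx => hx.1) (fun s hs => h.p0 s hs.1 v) (fun a c ha hac hc => by
      have := hi2 a c ha hac (fun τ hτ => Prate_nonneg γ b hb _ _ (h.p0 τ (ha.trans hτ.1))
        (h.q0 τ (ha.trans hτ.1)) v)
      simp only [zero_add, zero_sub, intervalIntegral.integral_neg,
        intervalIntegral.integral_const_mul] at this
      linarith)
  refine le_trans ?_ this
  have := hv hvb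
  gcongr

/-- Radii of the spreading balls. -/
def rad (δ : ℝ) (n : ℕ) : ℝ := δ / 2 * (1 + √2 ^ n)

/-- Lower bounds on the spreading balls. -/
def aseq (c ε : ℝ) : ℕ → ℝ
  | 0 => ε
  | n + 1 => c / 8 ^ n * (aseq c ε n * aseq c ε n)

lemma aseq_pos (c ε : ℝ) (hc : 0 < c) (hε : 0 < ε) (n : ℕ) : 0 < aseq c ε n := by
  induction n with
  | zero => exact hε
  | succ n ih => rw [aseq]; positivity

lemma aseq_le (c ε : ℝ) (hc : 0 < c) (hc1 : c ≤ 1) (hε : 0 < ε) (hε1 : ε ≤ 1) (n : ℕ) :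
    aseq c ε n ≤ ε := by
  induction n with
  | zero => exact le_rfl
  | succ n ih =>
    rw [aseq]
    have hp := aseq_pos c ε hc hε n
    have h8 : c / 8 ^ n ≤ 1 := by
      rw [div_le_one (by positivity)]
      exact hc1.trans (one_le_pow₀ (by norm_num))
    calc c / 8 ^ n * (aseq c ε n * aseq c ε n) ≤ 1 * (ε * 1) := by
          gcongr; exact ih.trans hε1
      _ = ε := by ring

lemma aseq_ge (c ε : ℝ) (hc : 0 < c) (hc1 : c ≤ 1) (hε : 0 < ε) (n : ℕ) :
    (c * ε / 8) ^ (2 ^ n) ≤ aseq c ε n := by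
  have key : (c * ε / 8) ^ (2 ^ n) = c * aseq c ε n / 8 ^ (n + 1) := by
    induction n with
    | zero => simp [aseq]
    | succ n ih =>
      rw [pow_succ 2 n, pow_mul, ih, aseq]
      field_simp
      ring
  rw [key, div_le_iff₀ (by positivity)]
  have hp := aseq_pos c ε hc hε n
  have : (1:ℝ) ≤ 8 ^ (n + 1) := one_le_pow₀ (by norm_num)
  nlinarith

lemma sqrt_two_ge : (5:ℝ)/4 ≤ √2 := by
  rw [Real.le_sqrt' (by norm_num)]; norm_num

lemma rad_ge (δ : ℝ) (hδ : 0 < δ) (n : ℕ) : δ ≤ rad δ n := by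
  unfold rad
  have : (1:ℝ) ≤ √2 ^ n := one_le_pow₀ (by linarith [sqrt_two_ge])
  nlinarith

lemma rad_le (δ : ℝ) (hδ : 0 < δ) (n : ℕ) : rad δ n ≤ δ * √2 ^ n := by
  unfold rad
  have : (1:ℝ) ≤ √2 ^ n := one_le_pow₀ (by linarith [sqrt_two_ge])
  nlinarith

lemma rad_le2 (δ : ℝ) (hδ : 0 < δ) (n : ℕ) : rad δ n ≤ δ * 2 ^ n := by
  refine (rad_le δ hδ n).trans ?_
  gcongr
  rw [Real.sqrt_le_left (by norm_num)]; norm_num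

lemma rad_sq (δ : ℝ) (hδ : 0 < δ) (n : ℕ) : rad δ n ^ 2 ≤ δ ^ 2 * 2 ^ n := by
  calc rad δ n ^ 2 ≤ (δ * √2 ^ n) ^ 2 := by
        have := rad_le δ hδ n
        have := rad_ge δ hδ n
        gcongr
        linarith
    _ = _ := by rw [mul_pow, ← pow_mul, mul_comm n 2, pow_mul, Real.sq_sqrt (by norm_num)]

lemma rad_succ (δ : ℝ) (hδ : 0 < δ) (n : ℕ) : rad δ (n+1) ≤ √2 * (rad δ n - δ / 10) := by
  unfold rad
  rw [pow_succ]
  nlinarith [sqrt_two_ge]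

lemma RSys.spread {γ : ℝ} (hγ0 : 0 ≤ γ) {b : ℝ → ℝ} (hb : GradCutoff b)
    (c_b : ℝ) (hc_b : 0 < c_b)
    (hH2 : ∀ θ ∈ Icc (π/4) (3*π/4), c_b ≤ b (Real.cos θ))
    {K : ℝ} (hK : 0 < K) {p q : ℝ → R3 → ℝ}
    (h : RSys γ b K p q) (vbar : R3) (δ ε T ts : ℝ) (hδ : 0 < δ) (hε : 0 < ε) (hε1 : ε ≤ 1)
    (hts : 0 < ts) (hts1 : ts ≤ 1)
    (hbp : ∀ᵐ v : R3, ∀ t ∈ Icc 0 T, ‖v - vbar‖ ≤ δ → ε ≤ p t v)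
    (hbq : ∀ᵐ v : R3, ∀ t ∈ Icc 0 T, ‖v - vbar‖ ≤ δ → ε ≤ q t v) :
    ∃ c, 0 < c ∧ c ≤ 1 ∧ ∀ n : ℕ, ∀ᵐ v : R3, ∀ t ∈ Icc (ts * (1 - (1/2) ^ n)) T,
      ‖v - vbar‖ ≤ rad δ n → aseq c ε n ≤ p t v := by
  have hvol : 0 < (volume (Metric.closedBall vbar (δ / 40))).toReal :=
    ENNReal.toReal_pos (Metric.measure_closedBall_pos _ _ (by positivity)).ne'
      measure_closedBall_lt_top.ne
  set vol := (volume (Metric.closedBall vbar (δ / 40))).toReal with hvolE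
  set c1 := c_b * (δ / 2) ^ γ * ε * (2 * π * (2 * (δ / 80)) * vol) with hc1
  have hc1p : 0 < c1 := by positivity
  set K2 := 1 + 2 * K * (1 + 2 * ‖vbar‖ ^ 2 + 4 * δ ^ 2) with hK2
  have hK2p : 0 < K2 := by positivity
  set c := min 1 (c1 * ts / (2 * δ * K2)) with hc
  have hcp : 0 < c := lt_min one_pos (by positivity)
  have hcle1 : c ≤ 1 := min_le_left _ _
  have hcle : c ≤ c1 * ts / (2 * δ * K2) := min_le_right _ _
  refine ⟨c, hcp, hcle1, fun n => ?_⟩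
  induction n with
  | zero =>
    filter_upwards [hbp] with v hv t ht hvb
    refine hv t ⟨?_, ht.2⟩ ?_
    · have := ht.1; simpa using this
    · refine hvb.trans ?_; unfold rad; norm_num
  | succ n ih =>
    set an := aseq c ε n with han
    have hanp : 0 < an := aseq_pos c ε hcp hε n
    set tn := ts * (1 - (1/2) ^ n) with htn
    have hh : (0:ℝ) < (1/2) ^ n := by positivity
    have hh1 : ((1:ℝ)/2) ^ n ≤ 1 := pow_le_one₀ (by norm_num) (by norm_num)
    have htn0 : 0 ≤ tn := mul_nonneg hts.le (by linarith)
    set ℓ := K * (1 + 2 * ‖vbar‖ ^ 2 + 4 * δ ^ 2 * 2 ^ n) with hℓ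
    have hℓ0 : 0 ≤ ℓ := by positivity
    set g := c1 * (an * an) / (δ * 2 ^ n) with hg
    have hg0 : 0 ≤ g := by positivity
    have good := ae_good (fun u => (∀ t ∈ Icc tn T, ‖u - vbar‖ ≤ rad δ n → an ≤ p t u) ∧
      (∀ t ∈ Icc 0 T, ‖u - vbar‖ ≤ δ → ε ≤ q t u)) (ih.and hbq)
    filter_upwards [hbp, good, h.ineq hb ℓ] with v hv1 hv2 hi t ht hvb
    have hpow : ((1:ℝ)/2) ^ (n+1) = (1/2) ^ n / 2 := by rw [pow_succ]; ring
    set s := ts * ((1/2) ^ n / 2) with hs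
    have hs0 : 0 < s := by positivity
    have hs1 : s ≤ 1 := by
      calc s ≤ 1 * (1 / 2) := by rw [hs]; gcongr
        _ ≤ 1 := by norm_num
    have hts' : tn ≤ t - s := by
      have := ht.1
      rw [hpow] at this
      have e : ts * (1 - (1/2) ^ n / 2) = tn + s := by rw [htn, hs]; ring
      linarith
    have ht0 : 0 ≤ t := by linarith
    rcases le_or_gt ‖v - vbar‖ δ with hle | hgt
    · exact (aseq_le c ε hcp hcle1 hε hε1 (n+1)).trans (hv1 t ⟨ht0, ht.2⟩ hle)
    have hvn : ‖v‖ ^ 2 ≤ 2 * ‖vbar‖ ^ 2 + 4 * δ ^ 2 * 2 ^ n := by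
      have h1 : ‖v‖ ≤ ‖vbar‖ + rad δ (n+1) := by
        have := norm_le_norm_add_norm_sub' v vbar
        linarith
      have h2 := rad_sq δ hδ (n+1)
      have h3 : ‖v‖ ^ 2 ≤ (‖vbar‖ + rad δ (n+1)) ^ 2 := by gcongr
      rw [pow_succ 2 n] at h2
      nlinarith [sq_nonneg (‖vbar‖ - rad δ (n+1))]
    have hℓv : K * (1 + ‖v‖ ^ 2) ≤ ℓ := by
      rw [hℓ]; exact mul_le_mul_of_nonneg_left (by linarith) hK.le
    have hrate : ∀ τ ∈ Icc (t - s) t, g ≤ Prate γ b (p τ) (q τ) v := by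
      intro τ hτ
      have hτ0 : 0 ≤ τ := by linarith [hτ.1]
      have hτT : τ ≤ T := hτ.2.trans ht.2
      have hrn := rad_ge δ hδ n
      have hl := P_lower γ hγ0 b hb c_b hc_b hH2 (p τ) (q τ) (h.p0 τ hτ0) (h.q0 τ hτ0) v vbar δ
        (rad δ n) an ε hδ hrn hanp.le hε.le (h.int τ hτ0 v) hgt.le
        (hvb.trans (rad_succ δ hδ n)) (by
          filter_upwards [hv2] with y hy
          exact ⟨hy.1.1 τ ⟨hts'.trans hτ.1, hτT⟩, hy.2.1.1 τ ⟨hts'.trans hτ.1, hτT⟩,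
            hy.2.2.2 τ ⟨hτ0, hτT⟩⟩)
      refine le_trans ?_ hl
      have hr2 := rad_le2 δ hδ n
      have hrpos : 0 < rad δ n := by linarith
      calc g ≤ c1 * (an * an) / rad δ n := by rw [hg]; gcongr
        _ = _ := by rw [hc1]; field_simp; exact hvolE
    have hgℓ : g ≤ ℓ := (hrate t ⟨by linarith, le_rfl⟩).trans ((h.rate1 t ht0 v).trans hℓv)
    have hcr := creation (fun t => p t v) ℓ g s t hℓ0 hg0 hgℓ hs0 hs1
      (hi.1.mono fun x hx => by
        have := hx.1
        show 0 ≤ x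
        linarith)
      (h.p0 _ (by linarith) v) (fun a c' ha hac hc' => hi.2 hℓv g a c' (by linarith) hac
        (fun τ hτ => hrate τ ⟨ha.trans hτ.1, hτ.2.trans hc'⟩))
    refine le_trans ?_ hcr
    have h2n : (1:ℝ) ≤ 2 ^ n := one_le_pow₀ (by norm_num)
    have hden : 1 + 2 * ℓ ≤ K2 * 2 ^ n := by
      have e : K2 * 2 ^ n - (1 + 2 * ℓ) = (2 ^ n - 1) * (1 + 2 * K * (1 + 2 * ‖vbar‖ ^ 2)) := by
        rw [hK2, hℓ]; ring
      have : 0 ≤ (2 ^ n - 1) * (1 + 2 * K * (1 + 2 * ‖vbar‖ ^ 2)) :=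
        mul_nonneg (by linarith) (by positivity)
      linarith
    have h8 : (8:ℝ) ^ n = 2 ^ n * 2 ^ n * 2 ^ n := by
      rw [← mul_pow, ← mul_pow]; norm_num
    calc aseq c ε (n+1) = c / 8 ^ n * (an * an) := by rw [aseq]
      _ ≤ (c1 * ts / (2 * δ * K2)) / 8 ^ n * (an * an) := by gcongr
      _ = g * s / (K2 * 2 ^ n) := by
        rw [hg, hs, h8, div_pow, one_pow]
        field_simp
      _ ≤ g * s / (1 + 2 * ℓ) := by gcongr

lemma RSys.gauss {γ : ℝ} (hγ0 : 0 ≤ γ) {b : ℝ → ℝ} (hb : GradCutoff b)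
    (c_b : ℝ) (hc_b : 0 < c_b)
    (hH2 : ∀ θ ∈ Icc (π/4) (3*π/4), c_b ≤ b (Real.cos θ))
    {K : ℝ} (hK : 0 < K) {p q : ℝ → R3 → ℝ}
    (h : RSys γ b K p q) (h' : RSys γ b K q p)
    (vbar : R3) (δ ε T ts : ℝ) (hδ : 0 < δ) (hε : 0 < ε) (hε1 : ε ≤ 1)
    (hts : 0 < ts) (hts1 : ts ≤ 1) (hT : 0 ≤ T)
    (hinp : ∀ᵐ v : R3, ‖v - vbar‖ ≤ δ → ε ≤ p 0 v)
    (hinq : ∀ᵐ v : R3, ‖v - vbar‖ ≤ δ → ε ≤ q 0 v) :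
    ∃ C1 C2 : ℝ, 0 < C1 ∧ 0 < C2 ∧ ∀ᵐ v : R3, ∀ t ∈ Icc ts T,
      C1 * Real.exp (-C2 * ‖v‖ ^ 2) ≤ p t v := by
  obtain ⟨ε1, he1, he1', hbp⟩ := h.ball hb hK vbar δ ε T hδ hε hε1 hT hinp
  obtain ⟨ε2, he2, he2', hbq⟩ := h'.ball hb hK vbar δ ε T hδ hε hε1 hT hinq
  set e := min ε1 ε2 with he
  have hep : 0 < e := lt_min he1 he2
  have hee : e ≤ 1 := (min_le_left _ _).trans he1'
  obtain ⟨c, hc, hc1, hsp⟩ := h.spread hγ0 hb c_b hc_b hH2 hK vbar δ e T ts hδ hep hee hts hts1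
    (by filter_upwards [hbp] with v hv t ht hvb; exact (min_le_left _ _).trans (hv t ht hvb))
    (by filter_upwards [hbq] with v hv t ht hvb; exact (min_le_right _ _).trans (hv t ht hvb))
  set α := c * e / 8 with hα
  have hα0 : 0 < α := by positivity
  have hα1 : α < 1 := by rw [hα]; nlinarith
  have hlog : Real.log α < 0 := Real.log_neg hα0 hα1
  set A := -Real.log α with hA
  have hA0 : 0 < A := by linarith
  refine ⟨Real.exp (-(A * (2 + 16 * ‖vbar‖ ^ 2 / δ ^ 2))), A * (16 / δ ^ 2), Real.exp_pos _, by positivity, ?_⟩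
  rw [← ae_all_iff] at hsp
  filter_upwards [hsp] with v hv t ht
  set x := 1 + 4 * ‖v - vbar‖ ^ 2 / δ ^ 2 with hx
  have hx1 : 1 ≤ x := by
    have : 0 ≤ 4 * ‖v - vbar‖ ^ 2 / δ ^ 2 := by positivity
    linarith
  obtain ⟨n, hn1, hn2⟩ := exists_nat_pow_near hx1 (one_lt_two (α := ℝ))
  have hrad : ‖v - vbar‖ ≤ rad δ (n+1) := by
    have h1 : ‖v - vbar‖ ≤ δ / 2 * √2 ^ (n+1) := by
      refine (abs_le_of_sq_le_sq' ?_ (by positivity)).2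
      rw [mul_pow, ← pow_mul, mul_comm (n+1) 2, pow_mul, Real.sq_sqrt (by norm_num)]
      have : 4 * ‖v - vbar‖ ^ 2 / δ ^ 2 ≤ 2 ^ (n+1) := by linarith
      rw [div_le_iff₀ (by positivity)] at this
      nlinarith
    unfold rad
    linarith
  have h1 := hv (n+1) t ⟨by
    have : (0:ℝ) < (1/2) ^ (n+1) := by positivity
    have := ht.1
    nlinarith, ht.2⟩ hrad
  have h2 := aseq_ge c e hc hc1 hep (n+1)
  refine le_trans ?_ (h2.trans h1)
  rw [← hα]
  have e1 : α ^ (2 ^ (n+1)) = Real.exp (-(A * 2 ^ (n+1))) := by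
    rw [hA, neg_mul, neg_neg, ← Real.rpow_natCast, Real.rpow_def_of_pos hα0]
    push_cast; rfl
  rw [e1, ← Real.exp_add, Real.exp_le_exp]
  have hvv : ‖v - vbar‖ ^ 2 ≤ 2 * ‖v‖ ^ 2 + 2 * ‖vbar‖ ^ 2 := by
    have h1 := norm_sub_le v vbar
    have h3 : ‖v - vbar‖ ^ 2 ≤ (‖v‖ + ‖vbar‖) ^ 2 := by gcongr
    nlinarith [sq_nonneg (‖v‖ - ‖vbar‖)]
  have hfin : (2:ℝ) ^ (n+1) ≤ 2 + 16 * ‖vbar‖ ^ 2 / δ ^ 2 + 16 / δ ^ 2 * ‖v‖ ^ 2 := by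
    calc (2:ℝ) ^ (n+1) = 2 * 2 ^ n := by rw [pow_succ]; ring
      _ ≤ 2 * x := by gcongr
      _ ≤ 2 * (1 + 4 * (2 * ‖v‖ ^ 2 + 2 * ‖vbar‖ ^ 2) / δ ^ 2) := by rw [hx]; gcongr
      _ = _ := by field_simp; ring
  nlinarith


lemma expo_ge_two : (2:ℝ) ≤ 2 * Real.log 3 / Real.log 2 := by
  have h2 : 0 < Real.log 2 := Real.log_pos (by norm_num)
  have h3 : Real.log 2 ≤ Real.log 3 := Real.log_le_log (by norm_num) (by norm_num)
  rw [le_div_iff₀ h2]; linarith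

lemma sq_le_one_add_rpow (x s : ℝ) (hx : 0 ≤ x) (hs : 2 ≤ s) : x ^ 2 ≤ 1 + x ^ s := by
  rcases le_or_gt x 1 with h | h
  · have h1 : 0 ≤ x ^ s := Real.rpow_nonneg hx s
    have h2 : x ^ 2 ≤ 1 := pow_le_one₀ hx h
    linarith
  · have := Real.rpow_le_rpow_of_exponent_le h.le hs
    rw [Real.rpow_two] at this
    linarith

lemma both_bounds (γ : ℝ) (hγ₀ : 0 ≤ γ) (hγ₂ : γ ≤ 2) (b : ℝ → ℝ) (hb : GradCutoff b)
    (c_b : ℝ) (hc_b : 0 < c_b)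
    (hH2 : ∀ θ ∈ Icc (π/4) (3*π/4), c_b ≤ b (Real.cos θ))
    (f₀ : R3 → ℝ) (f : ℝ → R3 → ℝ) (hf : IsFDSolution γ b f₀ f)
    (ε : ℝ) (hε₀ : 0 < ε) (hε₁ : ε < 1) (vbar : R3) (δ : ℝ) (hδ : 0 < δ)
    (hinit : ∀ v : R3, ‖v - vbar‖ ≤ δ → ε ≤ f₀ v ∧ f₀ v ≤ 1 - ε)
    (ts T : ℝ) (hts : 0 < ts) (hts1 : ts ≤ 1) (hT : 0 ≤ T) :
    ∃ m M : ℝ, 0 < m ∧ 0 < M ∧ ∀ᵐ v : R3, ∀ t ∈ Icc ts T,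
      m * Real.exp (-M * ‖v‖ ^ 2) ≤ f t v ∧
      f t v ≤ 1 - m * Real.exp (-M * ‖v‖ ^ (2 * Real.log 3 / Real.log 2)) := by
  obtain ⟨K, hK, hr, hode⟩ := sol_ode γ hγ₀ hγ₂ b hb f₀ f hf
  have S1 : RSys γ b K f (fun t w => 1 - f t w) :=
    { p0 := hf.nonneg
      q0 := fun t ht v => by have := hf.le_one t ht v; linarith
      p1 := hf.le_one
      int := fun t ht v => (hr t ht v).1
      rate1 := fun t ht v => (hr t ht v).2.2.1
      rate2 := fun t ht v => (hr t ht v).2.2.2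
      ode := by filter_upwards [hode] with v hv; exact hv.2 }
  have S2 : RSys γ b K (fun t w => 1 - f t w) f :=
    { p0 := fun t ht v => by have := hf.le_one t ht v; linarith
      q0 := hf.nonneg
      p1 := fun t ht v => by have := hf.nonneg t ht v; linarith
      int := fun t ht v => (hr t ht v).2.1
      rate1 := fun t ht v => (hr t ht v).2.2.2
      rate2 := fun t ht v => (hr t ht v).2.2.1
      ode := by
        filter_upwards [hode] with v hv
        refine ⟨continuousOn_const.sub hv.2.1, fun a c ha hac => ?_⟩
        obtain ⟨i1, i2, e⟩ := hv.2.2 a c ha hac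
        refine ⟨i2, i1, ?_⟩
        have e2 : (1 - f c v) - (1 - f a v) = -(f c v - f a v) := by ring
        rw [e2, e, ← intervalIntegral.integral_neg]
        congr 1
        funext τ
        ring }
  have hin1 : ∀ᵐ v : R3, ‖v - vbar‖ ≤ δ → ε ≤ f 0 v := by
    filter_upwards [hode] with v hv hb
    rw [hv.1]; exact (hinit v hb).1
  have hin2 : ∀ᵐ v : R3, ‖v - vbar‖ ≤ δ → ε ≤ 1 - f 0 v := by
    filter_upwards [hode] with v hv hb
    rw [hv.1]; linarith [(hinit v hb).2]
  obtain ⟨A1, A2, hA1, hA2, hA⟩ := S1.gauss hγ₀ hb c_b hc_b hH2 hK S2 vbar δ ε T ts hδ hε₀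
    hε₁.le hts hts1 hT hin1 hin2
  obtain ⟨B1, B2, hB1, hB2, hB⟩ := S2.gauss hγ₀ hb c_b hc_b hH2 hK S1 vbar δ ε T ts hδ hε₀
    hε₁.le hts hts1 hT hin2 hin1
  refine ⟨min A1 (B1 * Real.exp (-B2)), max A2 B2,
    lt_min hA1 (mul_pos hB1 (Real.exp_pos _)), lt_max_of_lt_left hA2, ?_⟩
  filter_upwards [hA, hB] with v h1 h2 t ht
  constructor
  · refine le_trans ?_ (h1 t ht)
    apply mul_le_mul (min_le_left _ _) _ (Real.exp_pos _).le hA1.le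
    rw [Real.exp_le_exp]
    have := mul_le_mul_of_nonneg_right (le_max_left A2 B2) (sq_nonneg ‖v‖)
    linarith
  · have h3 := h2 t ht
    have hs := sq_le_one_add_rpow ‖v‖ _ (norm_nonneg v) expo_ge_two
    set y := ‖v‖ ^ (2 * Real.log 3 / Real.log 2) with hy
    have hy0 : 0 ≤ y := Real.rpow_nonneg (norm_nonneg v) _
    have : min A1 (B1 * Real.exp (-B2)) * Real.exp (-(max A2 B2) * y)
        ≤ B1 * Real.exp (-B2 * ‖v‖ ^ 2) := by
      calc _ ≤ (B1 * Real.exp (-B2)) * Real.exp (-B2 * y) := by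
            apply mul_le_mul (min_le_right _ _) _ (Real.exp_pos _).le (by positivity)
            rw [Real.exp_le_exp]
            have := mul_le_mul_of_nonneg_right (le_max_right A2 B2) hy0
            linarith
        _ = B1 * Real.exp (-B2 + -B2 * y) := by rw [mul_assoc, ← Real.exp_add]
        _ ≤ _ := by
            apply mul_le_mul_of_nonneg_left _ hB1.le
            rw [Real.exp_le_exp]
            nlinarith
    linarith

lemma nat_bounds (N : ℕ → ℝ) (k : ℕ) : ∃ M, ∀ n ≤ k, N n ≤ M := by
  induction k with
  | zero => exact ⟨N 0, fun n hn => by rw [Nat.le_zero.1 hn]⟩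
  | succ k ih =>
    obtain ⟨M, hM⟩ := ih
    refine ⟨max M (N (k+1)), fun n hn => ?_⟩
    rcases Nat.le_succ_iff.1 hn with h | h
    · exact (hM n h).trans (le_max_left _ _)
    · rw [h]; exact le_max_right _ _

lemma nat_bounds' (N : ℕ → ℝ) (hN : ∀ n, 0 < N n) (k : ℕ) : ∃ m > 0, ∀ n ≤ k, m ≤ N n := by
  obtain ⟨M, hM⟩ := nat_bounds (fun n => (N n)⁻¹) k
  have hMp : 0 < M := (inv_pos.2 (hN 0)).trans_le (hM 0 (Nat.zero_le _))
  exact ⟨M⁻¹, inv_pos.2 hMp, fun n hn => inv_le_of_inv_le₀ (hN n) (hM n hn)⟩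

/-- Creation of a Gaussian lower bound (and exponential upper bound)
assuming `ε ≤ f₀ ≤ 1 - ε` on a ball. -/
theorem gaussian_lower_bound_creation
    (γ : ℝ) (hγ₀ : 0 ≤ γ) (hγ₂ : γ ≤ 2) (b : ℝ → ℝ) (hb : GradCutoff b)
    (c_b : ℝ) (hc_b : 0 < c_b)
    (hH2 : ∀ θ ∈ Icc (π/4) (3*π/4), c_b ≤ b (Real.cos θ))
    (f₀ : R3 → ℝ) (hf₀meas : Measurable f₀)
    (hf₀bd : ∀ᵐ v : R3 ∂volume, 0 ≤ f₀ v ∧ f₀ v ≤ 1) (hf₀L12 : MemL1s 2 f₀)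
    (f : ℝ → R3 → ℝ) (hf : IsFDSolution γ b f₀ f)
    (ε : ℝ) (hε₀ : 0 < ε) (hε₁ : ε < 1) (vbar : R3) (δ : ℝ) (hδ : 0 < δ)
    (r₀ : ℝ) (hr₀pos : 0 < r₀) (hvbar : ‖vbar‖ < r₀)
    (hinit : ∀ v : R3, ‖v - vbar‖ ≤ δ → ε ≤ f₀ v ∧ f₀ v ≤ 1 - ε) :
    ∃ C₁ C₂ : ℝ → ℝ,
      (∀ t : ℝ, 0 < t → 0 < C₁ t ∧ 0 < C₂ t) ∧
      (∀ t : ℝ, 0 < t → ∀ᵐ v : R3 ∂volume,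
        C₁ t * Real.exp (-(C₂ t) * ‖v‖ ^ 2) ≤ f t v ∧
        f t v ≤ 1 - C₁ t * Real.exp (-(C₂ t) * ‖v‖ ^ (2 * Real.log 3 / Real.log 2))) ∧
      (∀ T : ℝ, 1 ≤ T → ∃ m > (0:ℝ), ∀ t ∈ Icc T⁻¹ T, m ≤ C₁ t) ∧
      (∀ T : ℝ, 1 ≤ T → ∃ M : ℝ, ∀ t ∈ Icc T⁻¹ T, C₂ t ≤ M) := by
  have key := fun n : ℕ => both_bounds γ hγ₀ hγ₂ b hb c_b hc_b hH2 f₀ f hf ε hε₀ hε₁ vbar δ hδ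
    hinit ((n:ℝ) + 1)⁻¹ ((n:ℝ) + 1) (by positivity)
    (inv_le_one_of_one_le₀ (by linarith [Nat.cast_nonneg (α := ℝ) n])) (by positivity)
  choose m M hm hM hmM using key
  have hNle : ∀ T : ℝ, 1 ≤ T → ∀ t ∈ Icc T⁻¹ T, ⌈max t t⁻¹⌉₊ ≤ ⌈T⌉₊ := by
    intro T hT t ht
    have hT0 : 0 < T⁻¹ := by positivity
    refine Nat.ceil_le_ceil (max_le ht.2 ?_)
    exact inv_le_of_inv_le₀ (by linarith) ht.1
  refine ⟨fun t => m ⌈max t t⁻¹⌉₊, fun t => M ⌈max t t⁻¹⌉₊, fun t _ => ⟨hm _, hM _⟩, ?_, ?_, ?_⟩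
  · intro t ht
    filter_upwards [hmM ⌈max t t⁻¹⌉₊] with v hv
    refine hv t ?_
    have h1 := Nat.le_ceil (max t t⁻¹)
    have h2 := (le_max_left t t⁻¹).trans h1
    have h3 := (le_max_right t t⁻¹).trans h1
    exact ⟨inv_le_of_inv_le₀ ht (by linarith), by linarith⟩
  · intro T hT
    obtain ⟨k, hk, hk'⟩ := nat_bounds' m hm ⌈T⌉₊
    exact ⟨k, hk, fun t ht => hk' _ (hNle T hT t ht)⟩
  · intro T hT
    obtain ⟨k, hk'⟩ := nat_bounds M ⌈T⌉₊
    exact ⟨k, fun t ht => hk' _ (hNle T hT t ht)⟩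
end
end
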